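/- (Proposition 2: conditional Hölder stability for the linearized source problem.) Under the assumptions of the context, there exist constants C > 0, θ₁ ∈ (0,1) and ε ∈ (0,T), depending on n, T, M, δ₀, D, R, p₁, H and M₀ but not on y and f, such that if in addition ∫₀^T (sup_{x∈D} |∂_t y(x,t)|)² dt ≤ M₀², then (∫_D |f(x)|² dx)^{1/2} + (∫₀^ε ∫_D (|y(x,t)|² + |∂_t y(x,t)|²) dx dt)^{1/2} ≤ C (d₁^{θ₁} + d₁), where d₁ := (∫₀^T ∫_{B_{ρ₁}} |∂_t y(G₁(x'), t)|² ω₁(x') dx' dt)^{1/2}. -/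

import Mathlib

noncomputable section

open MeasureTheory Metric Set
open scoped RealInnerProductSpace

abbrev Esp (n : ℕ) : Type := EuclideanSpace ℝ (Fin n)

/-- The point `(x', xₙ) ∈ ℝ^{d+1} = ℝ^d × ℝ`. -/
noncomputable def graphMk (d : ℕ) (x' : Esp d) (xn : ℝ) : Esp (d+1) :=
  (EuclideanSpace.equiv (Fin (d+1)) ℝ).symm
    (Fin.snoc (⇑(EuclideanSpace.equiv (Fin d) ℝ) x') xn)

/-- `H` is `(M, δ₀)`-admissible on the compact set `K`. -/
def IsAdmissible {n : ℕ} (M δ₀ : ℝ) (K : Set (Esp n)) (H : Esp n → Esp n) : Prop :=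
  ∃ U : Set (Esp n), IsOpen U ∧ Convex ℝ U ∧ K ⊆ U ∧ ContDiffOn ℝ 1 H U ∧
    (∀ x ∈ U, ‖H x‖ ≤ M) ∧ (∀ x ∈ U, ‖fderiv ℝ H x‖ ≤ M) ∧ (∀ x ∈ K, δ₀ < ‖H x‖)

/-- `ψ_H(x) = ⟨x, H(x)⟩`. -/
noncomputable def psiW {n : ℕ} (H : Esp n → Esp n) (x : Esp n) : ℝ := ⟪x, H x⟫

/-- The Carleman weight `φ_H(x,t) = -βt + ψ_H(x)`. -/
noncomputable def phiW {n : ℕ} (β : ℝ) (H : Esp n → Esp n) (x : Esp n) (t : ℝ) : ℝ :=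
  -(β * t) + psiW H x

/-- Outward unit normal `ν₁` of the upper graph `xₙ = ℓ(x')`. -/
noncomputable def nuUp (d : ℕ) (ℓ : Esp d → ℝ) (x' : Esp d) : Esp (d+1) :=
  (Real.sqrt (1 + ‖gradient ℓ x'‖ ^ 2))⁻¹ • graphMk d (-(gradient ℓ x')) 1

/-- Outward unit normal `ν₂` of the lower graph `xₙ = m(x')`. -/
noncomputable def nuDown (d : ℕ) (m : Esp d → ℝ) (x' : Esp d) : Esp (d+1) :=
  (Real.sqrt (1 + ‖gradient m x'‖ ^ 2))⁻¹ • graphMk d (gradient m x') (-1)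

/-- Area element `ω(x') = √(1 + |∇m(x')|²)` of the graph of `m`. -/
noncomputable def omegaW (d : ℕ) (m : Esp d → ℝ) (x' : Esp d) : ℝ :=
  Real.sqrt (1 + ‖gradient m x'‖ ^ 2)

/-- The graph domain `D = {(x', xₙ) : |x'| < ρ₁, ℓ(x') − ℓ̃(x') < xₙ < ℓ(x')}`. -/
def graphDomain (d : ℕ) (ρ₁ : ℝ) (ℓ ℓt : Esp d → ℝ) : Set (Esp (d+1)) :=
  {x | ∃ x' : Esp d, ∃ xn : ℝ, ‖x'‖ < ρ₁ ∧ ℓ x' - ℓt x' < xn ∧ xn < ℓ x' ∧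
    x = graphMk d x' xn}

/-!
Differentiating the equation in time, `u = ∂ₜy` solves the transport equation
`∂ₜu + ⟨H, ∇u⟩ + pu = (∂ₜR) f` with initial value `u(·, 0) = R(·, 0) f`, so `u(·, 0)` controls `f`.
Multiply by `exp(2s(ψ - βt)) u`, where `ψ(x) = ⟨x, H(x)⟩` grows along `H` at a rate of at least `2β`
because `diam D` is small. Transport then gains `sβ` in the interior, inflow through the lower graph
has the right sign, and only the trace on the upper graph is left as data. For large `s` the source
`(∂ₜR) f` is absorbed, being dominated by the initial value. The smallness of `diam D` relative to
`T` makes the weight at late times exponentially smaller in `s` than the weight at time `0`, while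
the data enter with an exponentially large factor; balancing the two in `s` gives the Hölder
exponent.
-/

section Splitting

variable (d : ℕ)

/-- The projection `(x', xₙ) ↦ x'`. -/
def initL : Esp (d + 1) →L[ℝ] Esp d :=
  ((EuclideanSpace.equiv (Fin d) ℝ).symm : (Fin d → ℝ) →L[ℝ] Esp d) ∘L
    ContinuousLinearMap.pi (fun i => EuclideanSpace.proj (Fin.castSucc i))

/-- The projection `(x', xₙ) ↦ xₙ`. -/
def lastL : Esp (d + 1) →L[ℝ] ℝ := EuclideanSpace.proj (Fin.last d)

@[simp] lemma initL_apply (x : Esp (d + 1)) (i : Fin d) : initL d x i = x (Fin.castSucc i) := rfl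

@[simp] lemma lastL_apply (x : Esp (d + 1)) : lastL d x = x (Fin.last d) := rfl

@[simp] lemma graphMk_castSucc (x' : Esp d) (a : ℝ) (i : Fin d) :
    graphMk d x' a (Fin.castSucc i) = x' i := by
  simp [graphMk]

@[simp] lemma graphMk_last (x' : Esp d) (a : ℝ) : graphMk d x' a (Fin.last d) = a := by
  simp [graphMk]

@[simp] lemma initL_graphMk (x' : Esp d) (a : ℝ) : initL d (graphMk d x' a) = x' := by
  ext i; simp

lemma lastL_graphMk (x' : Esp d) (a : ℝ) : lastL d (graphMk d x' a) = a := by simp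

lemma graphMk_initL_lastL (x : Esp (d + 1)) : graphMk d (initL d x) (lastL d x) = x := by
  ext i
  induction i using Fin.lastCases <;> simp

lemma inner_graphMk (v : Esp (d + 1)) (a : Esp d) (b : ℝ) :
    ⟪v, graphMk d a b⟫ = ⟪initL d v, a⟫ + lastL d v * b := by
  simp [PiLp.inner_apply, Fin.sum_univ_castSucc, mul_comm]

lemma norm_sq_graphMk (a : Esp d) (b : ℝ) : ‖graphMk d a b‖ ^ 2 = ‖a‖ ^ 2 + b ^ 2 := by
  simp [EuclideanSpace.norm_sq_eq, Fin.sum_univ_castSucc]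

lemma continuous_graphMk : Continuous (fun p : Esp d × ℝ => graphMk d p.1 p.2) :=
  (ContinuousLinearEquiv.continuous _).comp
    (((ContinuousLinearEquiv.continuous _).comp continuous_fst).finSnoc continuous_snd)

/-- The splitting `ℝ^d × ℝ ≃ ℝ^{d+1}` as a homeomorphism. -/
def graphMkHomeo : (Esp d × ℝ) ≃ₜ Esp (d + 1) where
  toFun p := graphMk d p.1 p.2
  invFun x := (initL d x, lastL d x)
  left_inv p := by simp
  right_inv x := graphMk_initL_lastL d x
  continuous_toFun := continuous_graphMk d
  continuous_invFun := (initL d).continuous.prodMk (lastL d).continuous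

lemma measurePreserving_graphMk :
    MeasurePreserving (fun p : Esp d × ℝ => graphMk d p.1 p.2) := by
  have insertLast := (PiLp.volume_preserving_toLp (Fin (d + 1))).comp
    (volume_preserving_piFinSuccAbove (fun _ : Fin (d + 1) => ℝ) (Fin.last d)).symm
  have swapOfLp := (Measure.measurePreserving_swap (μ := (volume : Measure (Fin d → ℝ)))
    (ν := (volume : Measure ℝ))).comp
      ((PiLp.volume_preserving_ofLp (Fin d)).prod (MeasurePreserving.id volume))
  convert insertLast.comp swapOfLp using 1
  · ext p i
    induction i using Fin.lastCases <;>
      simp [MeasurableEquiv.piFinSuccAbove, Fin.insertNthEquiv, Fin.insertNth_last']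
  · rfl

lemma measurableEmbedding_graphMk :
    MeasurableEmbedding (fun p : Esp d × ℝ => graphMk d p.1 p.2) :=
  (graphMkHomeo d).measurableEmbedding

end Splitting

section Normals

variable (d : ℕ) (m : Esp d → ℝ) (x' : Esp d)

lemma omegaW_pos : 0 < omegaW d m x' := by
  unfold omegaW; positivity

lemma omegaW_eq_sqrt_fderiv : omegaW d m x' = Real.sqrt (1 + ‖fderiv ℝ m x'‖ ^ 2) := by
  rw [omegaW, ← toDual_gradient, LinearIsometryEquiv.norm_map]

lemma norm_nuUp : ‖nuUp d m x'‖ = 1 := by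
  have hω : ‖graphMk d (-(gradient m x')) 1‖ = omegaW d m x' := by
    rw [← Real.sqrt_sq (norm_nonneg _), norm_sq_graphMk, norm_neg, one_pow, add_comm, omegaW]
  rw [nuUp, norm_smul, hω, norm_inv, Real.norm_of_nonneg (Real.sqrt_nonneg _)]
  exact inv_mul_cancel₀ (omegaW_pos d m x').ne'

lemma nuDown_eq_neg_nuUp : nuDown d m x' = -nuUp d m x' := by
  rw [nuDown, nuUp, ← smul_neg]
  congr 1
  ext i
  induction i using Fin.lastCases <;> simp

lemma inner_nuUp_mul_omegaW (v : Esp (d + 1)) :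
    ⟪v, nuUp d m x'⟫ * omegaW d m x' = lastL d v - fderiv ℝ m x' (initL d v) := by
  rw [nuUp, inner_smul_right, inner_graphMk, inner_neg_right, real_inner_comm,
    inner_gradient_left]
  change (omegaW d m x')⁻¹ * _ * omegaW d m x' = _
  have := (omegaW_pos d m x').ne'
  field_simp
  ring

lemma abs_inner_nuUp_mul_omegaW_le (v : Esp (d + 1)) :
    |⟪v, nuUp d m x'⟫ * omegaW d m x'| ≤ ‖v‖ * omegaW d m x' := by
  rw [abs_mul, abs_of_pos (omegaW_pos d m x')]
  gcongr
  · exact (omegaW_pos d m x').le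
  · simpa [norm_nuUp] using abs_real_inner_le_norm v (nuUp d m x')

end Normals

section Divergence

variable {n : ℕ} {V : Esp n → Esp n} {x : Esp n}

/-- The divergence of a vector field on `ℝⁿ`. -/
def divergence (V : Esp n → Esp n) (x : Esp n) : ℝ :=
  ∑ j, fderiv ℝ V x (EuclideanSpace.single j 1) j

lemma abs_divergence_le {M : ℝ} (h : ‖fderiv ℝ V x‖ ≤ M) : |divergence V x| ≤ n * M := by
  have hj (j : Fin n) : |fderiv ℝ V x (EuclideanSpace.single j 1) j| ≤ M :=
    (PiLp.norm_apply_le _ j).trans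
      (((fderiv ℝ V x).le_of_opNorm_le h _).trans_eq (by simp))
  calc |divergence V x| ≤ ∑ j : Fin n, |fderiv ℝ V x (EuclideanSpace.single j 1) j| :=
        Finset.abs_sum_le_sum_abs _ _
    _ ≤ ∑ _j : Fin n, M := Finset.sum_le_sum fun j _ => hj j
    _ = n * M := by simp

lemma divergence_smul {g : Esp n → ℝ} (hg : DifferentiableAt ℝ g x)
    (hV : DifferentiableAt ℝ V x) :
    divergence (fun z => g z • V z) x = g x * divergence V x + fderiv ℝ g x (V x) := by
  have hVx : fderiv ℝ g x (V x) = ∑ j, fderiv ℝ g x (EuclideanSpace.single j 1) * V x j := by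
    conv_lhs => rw [← (EuclideanSpace.basisFun (Fin n) ℝ).sum_repr (V x)]
    simp [mul_comm]
  rw [hVx, divergence, divergence, Finset.mul_sum, ← Finset.sum_add_distrib,
    fderiv_fun_smul hg hV]
  simp

lemma divergence_congr {W : Esp n → Esp n} (h : V =ᶠ[nhds x] W) :
    divergence V x = divergence W x := by
  simp only [divergence, h.fderiv_eq]

lemma continuousOn_divergence {D : Set (Esp n)} (hV : ContDiffOn ℝ 1 V D)
    (hD : IsOpen D) : ContinuousOn (divergence V) D := by
  have := hV.continuousOn_fderiv_of_isOpen hD le_rfl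
  unfold divergence
  fun_prop

lemma integral_fderiv_eq_zero_of_hasCompactSupport {F : Esp n → ℝ} (hF : ContDiff ℝ 1 F)
    (hs : HasCompactSupport F) (v : Esp n) : ∫ x, fderiv ℝ F x v = 0 := by
  have hc : Continuous (fun x => fderiv ℝ F x v) :=
    (hF.continuous_fderiv one_ne_zero).clm_apply continuous_const
  have hi := hc.integrable_of_hasCompactSupport (μ := volume) (hs.fderiv_apply (𝕜 := ℝ) v)
  have hi' := hF.continuous.integrable_of_hasCompactSupport (μ := volume) hs
  simpa using integral_mul_fderiv_eq_neg_fderiv_mul_of_integrable (μ := volume) (f := F)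
    (g := fun _ => (1 : ℝ)) (v := v) (by simpa using hi) (by simp) (by simpa using hi')
    (fun x _ => hF.differentiable one_ne_zero x) (fun x _ => differentiableAt_const _)

lemma integral_divergence_eq_zero_of_hasCompactSupport (hV : ContDiff ℝ 1 V)
    (hs : HasCompactSupport V) :
    Integrable (divergence V) ∧ ∫ x, divergence V x = 0 := by
  have hproj (j : Fin n) : ContDiff ℝ 1 (fun x => V x j) := by fun_prop
  have hsupp (j : Fin n) : HasCompactSupport (fun x => V x j) :=
    hs.comp_left (g := fun v : Esp n => v j) rfl
  have hderiv (j : Fin n) (x v : Esp n) : fderiv ℝ (fun x => V x j) x v = fderiv ℝ V x v j :=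
    DFunLike.congr_fun ((EuclideanSpace.proj (𝕜 := ℝ) j : Esp n →L[ℝ] ℝ).hasFDerivAt.comp x
      (hV.differentiable one_ne_zero x).hasFDerivAt).fderiv v
  have hint (j : Fin n) :
      Integrable fun x => fderiv ℝ (fun x => V x j) x (EuclideanSpace.single j 1) :=
    (((hproj j).continuous_fderiv one_ne_zero).clm_apply
      continuous_const).integrable_of_hasCompactSupport ((hsupp j).fderiv_apply (𝕜 := ℝ) _)
  have hdiv : divergence V =
      fun x => ∑ j, fderiv ℝ (fun x => V x j) x (EuclideanSpace.single j 1) := by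
    ext x; simp only [divergence, hderiv]
  rw [hdiv, integral_finsetSum _ fun j _ => hint j]
  exact ⟨integrable_finsetSum _ fun j _ => hint j, Finset.sum_eq_zero fun j _ =>
    integral_fderiv_eq_zero_of_hasCompactSupport (hproj j) (hsupp j) _⟩

lemma contDiff_indicator {E F : Type*} [NormedAddCommGroup E] [NormedSpace ℝ E]
    [NormedAddCommGroup F] [NormedSpace ℝ F] {r : WithTop ℕ∞} {D K : Set E} {f : E → F}
    (hD : IsOpen D) (hK : IsClosed K) (hKD : K ⊆ D) (hf : ContDiffOn ℝ r f D)
    (h0 : ∀ x ∈ D, x ∉ K → f x = 0) : ContDiff ℝ r (D.indicator f) := by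
  refine contDiff_iff_contDiffAt.2 fun x => ?_
  by_cases hx : x ∈ D
  · exact (hf.contDiffAt (hD.mem_nhds hx)).congr_of_eventuallyEq
      (eqOn_indicator.eventuallyEq_of_mem (hD.mem_nhds hx))
  · refine contDiffAt_const (c := 0) |>.congr_of_eventuallyEq ?_
    filter_upwards [hK.isOpen_compl.mem_nhds fun h => hx (hKD h)] with z hz
    exact indicator_apply_eq_zero.2 fun hzD => h0 z hzD hz

lemma setIntegral_divergence_eq_zero {D K : Set (Esp n)} (hD : IsOpen D) (hK : IsCompact K)
    (hKD : K ⊆ D) (hV : ContDiffOn ℝ 1 V D) (h0 : ∀ x ∈ D, x ∉ K → V x = 0) :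
    IntegrableOn (divergence V) D ∧ ∫ x in D, divergence V x = 0 := by
  have hsupp : ∀ x, x ∉ K → D.indicator V x = 0 := fun x hx =>
    indicator_apply_eq_zero.2 fun hxD => h0 x hxD hx
  obtain ⟨hint, hzero⟩ := integral_divergence_eq_zero_of_hasCompactSupport
    (contDiff_indicator hD hK.isClosed hKD hV h0) (HasCompactSupport.intro hK hsupp)
  have hin : EqOn (divergence (D.indicator V)) (divergence V) D := fun x hx =>
    divergence_congr (eqOn_indicator.eventuallyEq_of_mem (hD.mem_nhds hx))
  have hout : ∀ x, x ∉ D → divergence (D.indicator V) x = 0 := fun x hx => by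
    have : D.indicator V =ᶠ[nhds x] fun _ => 0 := by
      filter_upwards [hK.isClosed.isOpen_compl.mem_nhds fun h => hx (hKD h)] with z hz
      exact hsupp z hz
    rw [divergence_congr this]
    simp [divergence]
  refine ⟨hint.integrableOn.congr_fun hin hD.measurableSet, ?_⟩
  rw [← setIntegral_congr_fun hD.measurableSet hin,
    setIntegral_eq_integral_of_forall_compl_eq_zero hout, hzero]

end Divergence

section RampCutoff

open Filter Topology

/-- A smooth cutoff of the half line `(0, ∞)`, rising from `0` to `1` on `[1/k, 2/k]`; its
derivative is an approximate identity at the endpoint `0`. -/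
def rampCutoff (k : ℕ) (r : ℝ) : ℝ := Real.smoothTransition (k * r - 1)

variable {k : ℕ} {r s a b : ℝ}

lemma contDiff_rampCutoff (k : ℕ) : ContDiff ℝ 1 (rampCutoff k) :=
  (Real.smoothTransition.contDiff (n := 1)).comp (by fun_prop)

lemma hasDerivAt_rampCutoff (k : ℕ) (r : ℝ) :
    HasDerivAt (rampCutoff k) (deriv (rampCutoff k) r) r :=
  ((contDiff_rampCutoff k).differentiable one_ne_zero r).hasDerivAt

lemma continuous_deriv_rampCutoff (k : ℕ) : Continuous (deriv (rampCutoff k)) :=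
  (contDiff_rampCutoff k).continuous_deriv le_rfl

lemma rampCutoff_nonneg (k : ℕ) (r : ℝ) : 0 ≤ rampCutoff k r := Real.smoothTransition.nonneg _

lemma rampCutoff_le_one (k : ℕ) (r : ℝ) : rampCutoff k r ≤ 1 := Real.smoothTransition.le_one _

lemma rampCutoff_eq_zero (h : k * r ≤ 1) : rampCutoff k r = 0 :=
  Real.smoothTransition.zero_of_nonpos (by linarith)

lemma rampCutoff_eq_one (h : 2 ≤ k * r) : rampCutoff k r = 1 :=
  Real.smoothTransition.one_of_one_le (by linarith)

lemma deriv_rampCutoff_nonneg (k : ℕ) (r : ℝ) : 0 ≤ deriv (rampCutoff k) r :=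
  Monotone.deriv_nonneg fun _ _ hab => Real.smoothTransition.monotone (by gcongr)

lemma deriv_rampCutoff_eq_zero (h : 2 < k * r) : deriv (rampCutoff k) r = 0 := by
  have hev : rampCutoff k =ᶠ[𝓝 r] fun _ => 1 := by
    filter_upwards [((continuous_const_mul (k : ℝ)).tendsto r).eventually (lt_mem_nhds h)]
      with z hz using rampCutoff_eq_one hz.le
  simpa using hev.deriv_eq

lemma exists_bound_deriv_rampCutoff (k : ℕ) :
    ∃ C, ∀ r, 0 ≤ r → |deriv (rampCutoff k) r| ≤ C := by
  obtain ⟨C, hC⟩ := (isCompact_Icc (a := (0 : ℝ)) (b := 2 / k)).exists_bound_of_continuousOn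
    (continuous_deriv_rampCutoff k).continuousOn
  refine ⟨max C 0, fun r hr => ?_⟩
  rcases k.eq_zero_or_pos with rfl | hk
  · simp [show rampCutoff 0 = fun _ => Real.smoothTransition (-1) by ext; simp [rampCutoff]]
  rcases le_or_gt r (2 / k) with h | h
  · exact (hC r ⟨hr, h⟩).trans (le_max_left _ _)
  · rw [deriv_rampCutoff_eq_zero (by rwa [div_lt_iff₀' (by positivity)] at h), abs_zero]
    exact le_max_right _ _

lemma deriv_rampCutoff_mul_rampCutoff (h : 4 ≤ k * (r + s)) :
    deriv (rampCutoff k) r * rampCutoff k s = deriv (rampCutoff k) r := by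
  rcases lt_or_ge 2 (k * r) with hr | hr
  · rw [deriv_rampCutoff_eq_zero hr, zero_mul]
  · rw [rampCutoff_eq_one (by linarith), mul_one]

lemma eventually_le_natCast_mul (c : ℝ) (hr : 0 < r) : ∀ᶠ k : ℕ in atTop, c ≤ k * r :=
  (tendsto_natCast_atTop_atTop.atTop_mul_const hr).eventually_ge_atTop c

lemma setIntegral_Ioo_deriv_rampCutoff (k : ℕ) (ha : 0 ≤ a) :
    ∫ r in Ioo 0 a, deriv (rampCutoff k) r = rampCutoff k a := by
  rw [← integral_Ioc_eq_integral_Ioo, ← intervalIntegral.integral_of_le ha,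
    intervalIntegral.integral_deriv_eq_sub (fun x _ => (hasDerivAt_rampCutoff k x).differentiableAt)
      ((continuous_deriv_rampCutoff k).intervalIntegrable _ _),
    rampCutoff_eq_zero (r := 0) (by simp), sub_zero]

lemma tendsto_setIntegral_deriv_rampCutoff_mul {w : ℝ → ℝ} {c : ℝ} (ha : 0 < a)
    (hw : IntegrableOn w (Ioo 0 a)) (hwc : Tendsto w (𝓝[>] 0) (𝓝 c)) :
    Tendsto (fun k : ℕ => ∫ r in Ioo 0 a, deriv (rampCutoff k) r * w r) atTop (𝓝 c) := by
  refine tendsto_setIntegral_peak_smul_of_integrableOn_of_tendsto (x₀ := 0) (t := Ioo 0 a)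
    measurableSet_Ioo measurableSet_Ioo subset_rfl self_mem_nhdsWithin (by simp)
    (Eventually.of_forall fun k r _ => deriv_rampCutoff_nonneg k r) ?_ ?_
    (Eventually.of_forall fun k => (continuous_deriv_rampCutoff k).aestronglyMeasurable) hw
    (hwc.mono_left (nhdsWithin_mono _ Ioo_subset_Ioi_self))
  · intro u hu h0u
    obtain ⟨δ, hδ, hδu⟩ := Metric.isOpen_iff.1 hu 0 h0u
    refine Metric.tendstoUniformlyOn_iff.2 fun ε hε => ?_
    filter_upwards [eventually_le_natCast_mul 3 hδ] with k hk r hr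
    have hδr : δ ≤ r := not_lt.1 fun h =>
      hr.2 (hδu (by simpa [abs_of_pos hr.1.1] using h))
    rw [deriv_rampCutoff_eq_zero (by nlinarith [(Nat.cast_nonneg k : (0 : ℝ) ≤ k)])]
    simpa using hε
  · refine tendsto_const_nhds.congr' ?_
    filter_upwards [eventually_le_natCast_mul 2 ha] with k hk
    rw [setIntegral_Ioo_deriv_rampCutoff k ha.le, rampCutoff_eq_one hk]

lemma setIntegral_Ioo_comp_sub_left (f : ℝ → ℝ) (hab : a ≤ b) :
    ∫ t in Ioo a b, f (b - t) = ∫ r in Ioo 0 (b - a), f r := by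
  rw [← integral_Ioc_eq_integral_Ioo, ← integral_Ioc_eq_integral_Ioo,
    ← intervalIntegral.integral_of_le hab, ← intervalIntegral.integral_of_le (sub_nonneg.2 hab),
    intervalIntegral.integral_comp_sub_left, sub_self]

lemma tendsto_setIntegral_rampCutoff_sub_left {w : ℝ → ℝ} (hab : a < b)
    (hw : ContinuousOn w (Icc a b)) :
    Tendsto (fun k : ℕ => ∫ t in Ioo a b,
      deriv (rampCutoff k) (b - t) * rampCutoff k (t - a) * w t) atTop (𝓝 (w b)) := by
  have hmaps : MapsTo (fun r => b - r) (Icc 0 (b - a)) (Icc a b) := fun r hr =>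
    ⟨by linarith [hr.2], by linarith [hr.1]⟩
  have hcont : ContinuousOn (fun r => w (b - r)) (Icc 0 (b - a)) := hw.comp (by fun_prop) hmaps
  have hlim : Tendsto (fun r => w (b - r)) (𝓝[>] 0) (𝓝 (w b)) := by
    have := (hcont.continuousWithinAt (left_mem_Icc.2 (sub_pos.2 hab).le)).mono_left
      (nhdsWithin_le_of_mem (Icc_mem_nhdsGT (sub_pos.2 hab)))
    simpa using this
  refine (tendsto_setIntegral_deriv_rampCutoff_mul (sub_pos.2 hab)
    (hcont.integrableOn_Icc.mono_set Ioo_subset_Icc_self) hlim).congr' ?_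
  filter_upwards [eventually_le_natCast_mul 4 (sub_pos.2 hab)] with k hk
  rw [← setIntegral_Ioo_comp_sub_left (fun r => deriv (rampCutoff k) r * w (b - r)) hab.le]
  refine setIntegral_congr_fun measurableSet_Ioo fun t _ => ?_
  simp only [sub_sub_cancel]
  rw [deriv_rampCutoff_mul_rampCutoff (by simpa using hk)]

lemma abs_setIntegral_rampCutoff_sub_left_le {w : ℝ → ℝ} {C : ℝ} (hab : a < b) (k : ℕ)
    (hw : ∀ t ∈ Ioo a b, |w t| ≤ C) :
    |∫ t in Ioo a b, deriv (rampCutoff k) (b - t) * rampCutoff k (t - a) * w t| ≤ C := by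
  have hC : 0 ≤ C := (abs_nonneg _).trans (hw _ (Set.nonempty_Ioo.2 hab).some_mem)
  have hint : IntegrableOn (fun t => deriv (rampCutoff k) (b - t) * C) (Ioo a b) :=
    ((((continuous_deriv_rampCutoff k).comp (continuous_sub_left b)).mul_const
      C).integrableOn_Icc).mono_set Ioo_subset_Icc_self
  calc |∫ t in Ioo a b, deriv (rampCutoff k) (b - t) * rampCutoff k (t - a) * w t|
      ≤ ∫ t in Ioo a b, deriv (rampCutoff k) (b - t) * C := by
        rw [← Real.norm_eq_abs]
        refine norm_integral_le_of_norm_le hint (ae_restrict_of_forall_mem measurableSet_Ioo ?_)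
        intro t ht
        rw [norm_mul, norm_mul, Real.norm_of_nonneg (deriv_rampCutoff_nonneg _ _),
          Real.norm_of_nonneg (rampCutoff_nonneg _ _)]
        exact mul_le_mul (mul_le_of_le_one_right (deriv_rampCutoff_nonneg _ _)
          (rampCutoff_le_one _ _)) (hw t ht) (norm_nonneg _) (deriv_rampCutoff_nonneg _ _)
    _ = rampCutoff k (b - a) * C := by
        rw [integral_mul_const, setIntegral_Ioo_comp_sub_left (deriv (rampCutoff k)) hab.le,
          setIntegral_Ioo_deriv_rampCutoff k (sub_pos.2 hab).le]
    _ ≤ C := mul_le_of_le_one_left hC (rampCutoff_le_one _ _)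

lemma setIntegral_rampCutoff_reflect (k : ℕ) (w : ℝ → ℝ) (hab : a < b) :
    ∫ t in Ioo a b, deriv (rampCutoff k) (t - a) * rampCutoff k (b - t) * w t =
      ∫ t in Ioo a b, deriv (rampCutoff k) (b - t) * rampCutoff k (t - a) * w (a + b - t) := by
  simp only [← integral_Ioc_eq_integral_Ioo, ← intervalIntegral.integral_of_le hab.le]
  have h := intervalIntegral.integral_comp_sub_left (a := a) (b := b)
    (fun t => deriv (rampCutoff k) (t - a) * rampCutoff k (b - t) * w t) (a + b)
  simp only [add_sub_cancel_right, add_sub_cancel_left] at h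
  rw [← h]
  refine intervalIntegral.integral_congr fun t _ => ?_
  congr 3 <;> ring

lemma tendsto_setIntegral_rampCutoff_sub_right {w : ℝ → ℝ} (hab : a < b)
    (hw : ContinuousOn w (Icc a b)) :
    Tendsto (fun k : ℕ => ∫ t in Ioo a b,
      deriv (rampCutoff k) (t - a) * rampCutoff k (b - t) * w t) atTop (𝓝 (w a)) := by
  have hmaps : MapsTo (fun t => a + b - t) (Icc a b) (Icc a b) := fun r hr =>
    ⟨by linarith [hr.2], by linarith [hr.1]⟩
  have h := tendsto_setIntegral_rampCutoff_sub_left hab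
    (hw.comp (f := fun t => a + b - t) (by fun_prop) hmaps)
  simp only [Function.comp_apply, add_sub_cancel_right] at h
  exact h.congr fun k => (setIntegral_rampCutoff_reflect k w hab).symm

lemma abs_setIntegral_rampCutoff_sub_right_le {w : ℝ → ℝ} {C : ℝ} (hab : a < b) (k : ℕ)
    (hw : ∀ t ∈ Ioo a b, |w t| ≤ C) :
    |∫ t in Ioo a b, deriv (rampCutoff k) (t - a) * rampCutoff k (b - t) * w t| ≤ C := by
  rw [setIntegral_rampCutoff_reflect k w hab]
  exact abs_setIntegral_rampCutoff_sub_left_le hab k fun t ht =>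
    hw _ ⟨by linarith [ht.2], by linarith [ht.1]⟩

end RampCutoff

/-- The standing assumptions on the pair `(ℓ, ℓ̃)` describing a graph domain of class `C¹`: the
thickness `ℓ̃` is positive over the open ball and vanishes on its boundary sphere. -/
structure IsGraphProfile {d : ℕ} (ρ : ℝ) (ℓ ℓt : Esp d → ℝ) : Prop where
  radius_pos : 0 < ρ
  contDiffOn_top : ContDiffOn ℝ 1 ℓ (closedBall 0 ρ)
  contDiffOn_thickness : ContDiffOn ℝ 1 ℓt (closedBall 0 ρ)
  thickness_pos : ∀ x', ‖x'‖ < ρ → 0 < ℓt x'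
  thickness_eq_zero : ∀ x', ‖x'‖ = ρ → ℓt x' = 0

section GraphDomain

open Filter Topology

variable {d : ℕ} {ρ : ℝ} {ℓ ℓt m : Esp d → ℝ} {x' : Esp d} {a : ℝ} {x : Esp (d + 1)}

lemma mem_graphDomain : x ∈ graphDomain d ρ ℓ ℓt ↔ ‖initL d x‖ < ρ ∧
    ℓ (initL d x) - ℓt (initL d x) < lastL d x ∧ lastL d x < ℓ (initL d x) := by
  constructor
  · rintro ⟨x', a, hball, hlow, htop, rfl⟩
    rw [initL_graphMk, lastL_graphMk]
    exact ⟨hball, hlow, htop⟩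
  · rintro ⟨hball, hlow, htop⟩
    exact ⟨_, _, hball, hlow, htop, (graphMk_initL_lastL d x).symm⟩

lemma graphMk_mem_graphDomain :
    graphMk d x' a ∈ graphDomain d ρ ℓ ℓt ↔ ‖x'‖ < ρ ∧ ℓ x' - ℓt x' < a ∧ a < ℓ x' := by
  rw [mem_graphDomain, initL_graphMk, lastL_graphMk]

lemma initL_mem_ball (hx : x ∈ graphDomain d ρ ℓ ℓt) : initL d x ∈ ball 0 ρ := by
  simpa using (mem_graphDomain.1 hx).1

lemma contDiffOn_comp_initL (hm : ContDiffOn ℝ 1 m (closedBall 0 ρ)) :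
    ContDiffOn ℝ 1 (fun x => m (initL d x)) (graphDomain d ρ ℓ ℓt) :=
  hm.comp (initL d).contDiff.contDiffOn fun _ hx => ball_subset_closedBall (initL_mem_ball hx)

lemma hasFDerivAt_sub_lastL (hm : ContDiffOn ℝ 1 m (closedBall 0 ρ))
    (hx : x ∈ graphDomain d ρ ℓ ℓt) :
    HasFDerivAt (fun x => m (initL d x) - lastL d x)
      (fderiv ℝ m (initL d x) ∘L initL d - lastL d) x := by
  have hmx : DifferentiableAt ℝ m (initL d x) :=
    (hm.contDiffAt (closedBall_mem_nhds_of_mem (initL_mem_ball hx))).differentiableAt one_ne_zero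
  exact (hmx.hasFDerivAt.comp x (initL d).hasFDerivAt).sub (lastL d).hasFDerivAt

/-- The set off which the `k`-th cutoff of a graph domain vanishes. -/
def graphCore (d : ℕ) (ρ : ℝ) (ℓ ℓt : Esp d → ℝ) (k : ℕ) : Set (Esp (d + 1)) :=
  {x | initL d x ∈ closedBall 0 ρ ∧ 1 ≤ k * (ℓ (initL d x) - lastL d x) ∧
    1 ≤ k * (lastL d x - (ℓ - ℓt) (initL d x))}

/-- The product cutoff of a graph domain, vanishing near both graphs. -/
def graphCutoff (d : ℕ) (ℓ ℓt : Esp d → ℝ) (k : ℕ) (x : Esp (d + 1)) : ℝ :=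
  rampCutoff k (ℓ (initL d x) - lastL d x) * rampCutoff k (lastL d x - (ℓ - ℓt) (initL d x))

/-- The flux density, with respect to `dx'`, of `V` through the vertical translate of the graph
of `m` passing through `x`. -/
def graphFlux (d : ℕ) (m : Esp d → ℝ) (V : Esp (d + 1) → Esp (d + 1)) (x : Esp (d + 1)) : ℝ :=
  ⟪V x, nuUp d m (initL d x)⟫ * omegaW d m (initL d x)

lemma abs_graphCutoff_le_one (k : ℕ) (x : Esp (d + 1)) : |graphCutoff d ℓ ℓt k x| ≤ 1 := by
  rw [graphCutoff, abs_of_nonneg (mul_nonneg (rampCutoff_nonneg _ _) (rampCutoff_nonneg _ _))]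
  exact mul_le_one₀ (rampCutoff_le_one _ _) (rampCutoff_nonneg _ _) (rampCutoff_le_one _ _)

lemma graphCutoff_eq_zero {k : ℕ} (hx : x ∈ graphDomain d ρ ℓ ℓt)
    (hxK : x ∉ graphCore d ρ ℓ ℓt k) : graphCutoff d ℓ ℓt k x = 0 := by
  by_contra hne
  have hone {r : ℝ} (hr : rampCutoff k r ≠ 0) : 1 ≤ k * r :=
    (lt_of_not_ge fun h => hr (rampCutoff_eq_zero h)).le
  exact hxK ⟨ball_subset_closedBall (initL_mem_ball hx), hone (left_ne_zero_of_mul hne),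
    hone (right_ne_zero_of_mul hne)⟩

lemma tendsto_graphCutoff (hx : x ∈ graphDomain d ρ ℓ ℓt) :
    Tendsto (fun k : ℕ => graphCutoff d ℓ ℓt k x) atTop (𝓝 1) := by
  obtain ⟨-, hlow, htop⟩ := mem_graphDomain.1 hx
  refine tendsto_const_nhds.congr' ?_
  filter_upwards [eventually_le_natCast_mul 2 (sub_pos.2 htop),
    eventually_le_natCast_mul 2 (sub_pos.2 hlow)] with k hk hk'
  rw [graphCutoff, Pi.sub_apply, rampCutoff_eq_one hk, rampCutoff_eq_one hk', one_mul]

lemma integral_indicator_graphDomain_slice (f : Esp (d + 1) → ℝ) (x' : Esp d) :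
    ∫ a, (graphDomain d ρ ℓ ℓt).indicator f (graphMk d x' a) = (ball (0 : Esp d) ρ).indicator
      (fun x' => ∫ a in Ioo (ℓ x' - ℓt x') (ℓ x'), f (graphMk d x' a)) x' := by
  by_cases hx' : ‖x'‖ < ρ
  · rw [indicator_of_mem (by simpa using hx'), ← integral_indicator measurableSet_Ioo]
    simp only [indicator, graphMk_mem_graphDomain, hx', true_and, mem_Ioo]
  · simp [indicator, graphMk_mem_graphDomain, hx']

lemma integrable_indicator_graphDomain_prod (hD : MeasurableSet (graphDomain d ρ ℓ ℓt))
    {f : Esp (d + 1) → ℝ} (hf : IntegrableOn f (graphDomain d ρ ℓ ℓt)) :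
    Integrable (fun p : Esp d × ℝ => (graphDomain d ρ ℓ ℓt).indicator f (graphMk d p.1 p.2))
      (volume.prod volume) :=
  ((measurePreserving_graphMk d).integrable_comp_emb (measurableEmbedding_graphMk d)).2
    (hf.integrable_indicator hD)

lemma setIntegral_graphDomain (hD : MeasurableSet (graphDomain d ρ ℓ ℓt)) {f : Esp (d + 1) → ℝ}
    (hf : IntegrableOn f (graphDomain d ρ ℓ ℓt)) :
    ∫ x in graphDomain d ρ ℓ ℓt, f x =
      ∫ x' in ball (0 : Esp d) ρ, ∫ a in Ioo (ℓ x' - ℓt x') (ℓ x'), f (graphMk d x' a) := by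
  rw [← integral_indicator hD, ← (measurePreserving_graphMk d).integral_comp
      (measurableEmbedding_graphMk d), Measure.volume_eq_prod,
    integral_prod _ (integrable_indicator_graphDomain_prod hD hf),
    ← integral_indicator measurableSet_ball]
  simp only [integral_indicator_graphDomain_slice]

lemma aestronglyMeasurable_setIntegral_slice (hD : MeasurableSet (graphDomain d ρ ℓ ℓt))
    {f : Esp (d + 1) → ℝ} (hf : IntegrableOn f (graphDomain d ρ ℓ ℓt)) :
    AEStronglyMeasurable (fun x' => ∫ a in Ioo (ℓ x' - ℓt x') (ℓ x'), f (graphMk d x' a))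
      (volume.restrict (ball (0 : Esp d) ρ)) := by
  have h := (integrable_indicator_graphDomain_prod hD hf).integral_prod_left.aestronglyMeasurable
  simp only [integral_indicator_graphDomain_slice] at h
  exact (aestronglyMeasurable_indicator_iff measurableSet_ball).1 h

lemma tendsto_setIntegral_graphDomain_of_slices (hD : MeasurableSet (graphDomain d ρ ℓ ℓt))
    {F : ℕ → Esp (d + 1) → ℝ} {L : Esp d → ℝ} {C : ℝ}
    (hF : ∀ k, IntegrableOn (F k) (graphDomain d ρ ℓ ℓt))
    (hC : ∀ k, ∀ x' ∈ ball (0 : Esp d) ρ,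
      |∫ a in Ioo (ℓ x' - ℓt x') (ℓ x'), F k (graphMk d x' a)| ≤ C)
    (hL : ∀ x' ∈ ball (0 : Esp d) ρ,
      Tendsto (fun k => ∫ a in Ioo (ℓ x' - ℓt x') (ℓ x'), F k (graphMk d x' a)) atTop
        (𝓝 (L x'))) :
    Tendsto (fun k => ∫ x in graphDomain d ρ ℓ ℓt, F k x) atTop
      (𝓝 (∫ x' in ball (0 : Esp d) ρ, L x')) := by
  simp only [fun k => setIntegral_graphDomain hD (hF k)]
  refine tendsto_integral_of_dominated_convergence (fun _ => C)
    (fun k => aestronglyMeasurable_setIntegral_slice hD (hF k))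
    (integrableOn_const (by finiteness)) (fun k => ?_) ?_
  · exact ae_restrict_of_forall_mem measurableSet_ball (hC k)
  · exact ae_restrict_of_forall_mem measurableSet_ball hL

namespace IsGraphProfile

variable (h : IsGraphProfile ρ ℓ ℓt)
include h

lemma contDiffOn_bottom : ContDiffOn ℝ 1 (ℓ - ℓt) (closedBall 0 ρ) :=
  h.contDiffOn_top.sub h.contDiffOn_thickness

lemma isOpen : IsOpen (graphDomain d ρ ℓ ℓt) := by
  have hcyl : IsOpen (initL d ⁻¹' ball 0 ρ) := isOpen_ball.preimage (initL d).continuous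
  have hcomp {m : Esp d → ℝ} (hm : ContDiffOn ℝ 1 m (closedBall 0 ρ)) :
      ContinuousOn (fun x => m (initL d x) - lastL d x) (initL d ⁻¹' ball 0 ρ) :=
    (hm.continuousOn.comp (initL d).continuous.continuousOn
      fun _ hx => ball_subset_closedBall hx).sub (lastL d).continuous.continuousOn
  convert ((hcomp h.contDiffOn_top).prodMk (hcomp h.contDiffOn_bottom)).isOpen_inter_preimage
    hcyl (isOpen_Ioi.prod isOpen_Iio : IsOpen (Ioi (0 : ℝ) ×ˢ Iio (0 : ℝ))) using 1
  ext x
  simp only [mem_graphDomain, mem_inter_iff, mem_preimage, mem_ball_zero_iff, mem_prod, mem_Ioi,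
    mem_Iio, sub_pos, sub_neg, Pi.sub_apply]
  tauto

lemma isCompact_closure : IsCompact (closure (graphDomain d ρ ℓ ℓt)) := by
  have hK : IsCompact (closedBall (0 : Esp d) ρ) := isCompact_closedBall _ _
  obtain ⟨A, hA⟩ := hK.exists_bound_of_continuousOn h.contDiffOn_top.continuousOn
  obtain ⟨B, hB⟩ := hK.exists_bound_of_continuousOn h.contDiffOn_bottom.continuousOn
  have himage : IsCompact ((fun p : Esp d × ℝ => graphMk d p.1 p.2) ''
      (closedBall 0 ρ ×ˢ Icc (-B) A)) :=
    (hK.prod isCompact_Icc).image (continuous_graphMk d)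
  refine himage.closure_of_subset ?_
  rintro x ⟨x', a, hball, hlow, htop, rfl⟩
  have hx' : x' ∈ closedBall (0 : Esp d) ρ := by simpa using hball.le
  exact ⟨(x', a), ⟨hx', (abs_le.1 (hB x' hx')).1.trans hlow.le,
    htop.le.trans ((le_abs_self _).trans (hA x' hx'))⟩, rfl⟩

lemma isFiniteMeasure : IsFiniteMeasure (volume.restrict (graphDomain d ρ ℓ ℓt)) :=
  ⟨by simpa using (measure_mono subset_closure).trans_lt h.isCompact_closure.measure_lt_top⟩

lemma graphMk_mem_closure (hx' : x' ∈ ball 0 ρ) (ha : a ∈ Icc (ℓ x' - ℓt x') (ℓ x')) :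
    graphMk d x' a ∈ closure (graphDomain d ρ ℓ ℓt) := by
  have hn : ‖x'‖ < ρ := by simpa using hx'
  have hsegment : (fun b : ℝ => graphMk d x' b) '' Ioo (ℓ x' - ℓt x') (ℓ x') ⊆
      graphDomain d ρ ℓ ℓt := by
    rintro _ ⟨b, hb, rfl⟩
    exact graphMk_mem_graphDomain.2 ⟨hn, hb.1, hb.2⟩
  rw [← closure_Ioo (by linarith [h.thickness_pos x' hn])] at ha
  exact closure_mono hsegment (image_closure_subset_closure_image
    ((continuous_graphMk d).comp (Continuous.prodMk_right x')) ⟨a, ha, rfl⟩)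

lemma graphMk_top_mem_closure (hx' : x' ∈ ball 0 ρ) :
    graphMk d x' (ℓ x') ∈ closure (graphDomain d ρ ℓ ℓt) :=
  h.graphMk_mem_closure hx'
    (right_mem_Icc.2 (by linarith [h.thickness_pos x' (by simpa using hx')]))

lemma graphCore_subset (k : ℕ) : graphCore d ρ ℓ ℓt k ⊆ graphDomain d ρ ℓ ℓt := by
  rintro x ⟨hball, htop, hlow⟩
  have htop' := pos_of_mul_pos_right (zero_lt_one.trans_le htop) k.cast_nonneg
  have hlow' := pos_of_mul_pos_right (zero_lt_one.trans_le hlow) k.cast_nonneg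
  simp only [Pi.sub_apply] at hlow'
  refine mem_graphDomain.2 ⟨lt_of_le_of_ne (by simpa using hball) fun heq => ?_,
    by linarith, by linarith⟩
  linarith [h.thickness_eq_zero _ heq]

lemma isCompact_graphCore (k : ℕ) : IsCompact (graphCore d ρ ℓ ℓt k) := by
  refine h.isCompact_closure.of_isClosed_subset ?_ ((h.graphCore_subset k).trans subset_closure)
  have hS : IsClosed (initL d ⁻¹' closedBall (0 : Esp d) ρ) :=
    isClosed_closedBall.preimage (initL d).continuous
  have hcomp {m : Esp d → ℝ} (hm : ContDiffOn ℝ 1 m (closedBall 0 ρ)) :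
      ContinuousOn (fun x => m (initL d x)) (initL d ⁻¹' closedBall (0 : Esp d) ρ) :=
    hm.continuousOn.comp (initL d).continuous.continuousOn fun _ hx => hx
  have hlast := (lastL d).continuous.continuousOn (s := initL d ⁻¹' closedBall (0 : Esp d) ρ)
  exact (((hcomp h.contDiffOn_top).sub hlast).const_smul (k : ℝ)).prodMk
    ((hlast.sub (hcomp h.contDiffOn_bottom)).const_smul (k : ℝ))
    |>.preimage_isClosed_of_isClosed hS (isClosed_Ici (a := ((1 : ℝ), (1 : ℝ))))

lemma contDiffOn_graphCutoff (k : ℕ) :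
    ContDiffOn ℝ 1 (graphCutoff d ℓ ℓt k) (graphDomain d ρ ℓ ℓt) :=
  ((contDiff_rampCutoff k).comp_contDiffOn
    ((contDiffOn_comp_initL h.contDiffOn_top).sub (lastL d).contDiff.contDiffOn)).mul
  ((contDiff_rampCutoff k).comp_contDiffOn
    ((lastL d).contDiff.contDiffOn.sub (contDiffOn_comp_initL h.contDiffOn_bottom)))

end IsGraphProfile

end GraphDomain

section DivergenceTheorem

open Filter Topology

variable {d : ℕ} {ρ : ℝ} {ℓ ℓt m : Esp d → ℝ} {x : Esp (d + 1)}

lemma exists_omegaW_le (hρ : 0 < ρ) (hm : ContDiffOn ℝ 1 m (closedBall 0 ρ)) :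
    ∃ C, ∀ x' ∈ ball (0 : Esp d) ρ, omegaW d m x' ≤ C := by
  have hu : UniqueDiffOn ℝ (closedBall (0 : Esp d) ρ) := uniqueDiffOn_convex
    (convex_closedBall _ _) ⟨0, ball_subset_interior_closedBall (mem_ball_self hρ)⟩
  obtain ⟨L, hL⟩ := (isCompact_closedBall (0 : Esp d) ρ).exists_bound_of_continuousOn
    (hm.continuousOn_fderivWithin hu le_rfl)
  refine ⟨Real.sqrt (1 + L ^ 2), fun x' hx' => ?_⟩
  rw [omegaW_eq_sqrt_fderiv, ← fderivWithin_of_mem_nhds (closedBall_mem_nhds_of_mem hx')]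
  have := hL x' (ball_subset_closedBall hx')
  gcongr

lemma continuousOn_fderiv_ball (hm : ContDiffOn ℝ 1 m (closedBall 0 ρ)) :
    ContinuousOn (fderiv ℝ m) (ball 0 ρ) :=
  (hm.mono ball_subset_closedBall).continuousOn_fderiv_of_isOpen isOpen_ball le_rfl

lemma continuousOn_omegaW (hm : ContDiffOn ℝ 1 m (closedBall 0 ρ)) :
    ContinuousOn (omegaW d m) (ball 0 ρ) := by
  have := continuousOn_fderiv_ball hm
  simp only [funext (omegaW_eq_sqrt_fderiv d m)]
  fun_prop

lemma continuousOn_graphFlux {V : Esp (d + 1) → Esp (d + 1)} {K : Set (Esp (d + 1))}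
    (hm : ContDiffOn ℝ 1 m (closedBall 0 ρ)) (hV : ContinuousOn V K) :
    ContinuousOn (graphFlux d m V) (K ∩ initL d ⁻¹' ball 0 ρ) := by
  have hV' := hV.mono (inter_subset_left : K ∩ initL d ⁻¹' ball 0 ρ ⊆ K)
  have hm' : ContinuousOn (fun x => fderiv ℝ m (initL d x)) (K ∩ initL d ⁻¹' ball 0 ρ) :=
    (continuousOn_fderiv_ball hm).comp (initL d).continuous.continuousOn inter_subset_right
  have hflux : graphFlux d m V =
      fun x => lastL d (V x) - fderiv ℝ m (initL d x) (initL d (V x)) :=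
    funext fun x => inner_nuUp_mul_omegaW d m (initL d x) (V x)
  rw [hflux]
  exact ((lastL d).continuous.comp_continuousOn hV').sub
    (hm'.clm_apply ((initL d).continuous.comp_continuousOn hV'))

lemma exists_abs_graphFlux_le {V : Esp (d + 1) → Esp (d + 1)} {K : Set (Esp (d + 1))}
    (hρ : 0 < ρ) (hm : ContDiffOn ℝ 1 m (closedBall 0 ρ)) (hK : IsCompact K)
    (hV : ContinuousOn V K) :
    ∃ C, ∀ x ∈ K ∩ initL d ⁻¹' ball 0 ρ, |graphFlux d m V x| ≤ C := by
  obtain ⟨A, hA⟩ := hK.exists_bound_of_continuousOn hV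
  obtain ⟨B, hB⟩ := exists_omegaW_le hρ hm
  refine ⟨A * B, fun x hx => (abs_inner_nuUp_mul_omegaW_le d m _ _).trans ?_⟩
  exact mul_le_mul (hA x hx.1) (hB _ hx.2) (omegaW_pos d m _).le
    ((norm_nonneg _).trans (hA x hx.1))

lemma fderiv_graphCutoff_apply (h : IsGraphProfile ρ ℓ ℓt) (k : ℕ)
    (hx : x ∈ graphDomain d ρ ℓ ℓt) (V : Esp (d + 1) → Esp (d + 1)) :
    fderiv ℝ (graphCutoff d ℓ ℓt k) x (V x) =
      deriv (rampCutoff k) (lastL d x - (ℓ - ℓt) (initL d x)) *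
          rampCutoff k (ℓ (initL d x) - lastL d x) * graphFlux d (ℓ - ℓt) V x -
        deriv (rampCutoff k) (ℓ (initL d x) - lastL d x) *
          rampCutoff k (lastL d x - (ℓ - ℓt) (initL d x)) * graphFlux d ℓ V x := by
  have hlow : HasFDerivAt (fun x => lastL d x - (ℓ - ℓt) (initL d x))
      (-(fderiv ℝ (ℓ - ℓt) (initL d x) ∘L initL d - lastL d)) x := by
    simpa only [neg_sub] using (hasFDerivAt_sub_lastL h.contDiffOn_bottom hx).fun_neg
  have hprod := ((hasDerivAt_rampCutoff k _).comp_hasFDerivAt x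
    (hasFDerivAt_sub_lastL h.contDiffOn_top hx)).mul
      ((hasDerivAt_rampCutoff k _).comp_hasFDerivAt x hlow)
  have hη : fderiv ℝ (graphCutoff d ℓ ℓt k) x = _ := hprod.fderiv
  rw [hη, graphFlux, graphFlux, inner_nuUp_mul_omegaW, inner_nuUp_mul_omegaW]
  simp only [add_apply, smul_apply, sub_apply, neg_apply, ContinuousLinearMap.comp_apply,
    smul_eq_mul, Function.comp_apply]
  ring

namespace IsGraphProfile

variable (h : IsGraphProfile ρ ℓ ℓt) {w : Esp (d + 1) → ℝ} {C : ℝ}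
include h

lemma integrableOn_of_continuousOn_of_bound (hw : ContinuousOn w (graphDomain d ρ ℓ ℓt))
    (hC : ∀ x ∈ graphDomain d ρ ℓ ℓt, |w x| ≤ C) : IntegrableOn w (graphDomain d ρ ℓ ℓt) := by
  have := h.isFiniteMeasure
  exact Integrable.of_bound (hw.aestronglyMeasurable h.isOpen.measurableSet) C
    (ae_restrict_of_forall_mem h.isOpen.measurableSet hC)

lemma closure_slice_subset {x' : Esp d} (hx' : x' ∈ ball 0 ρ) :
    MapsTo (graphMk d x') (Icc ((ℓ - ℓt) x') (ℓ x'))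
      (closure (graphDomain d ρ ℓ ℓt) ∩ initL d ⁻¹' ball 0 ρ) := fun a ha =>
  ⟨h.graphMk_mem_closure hx' ha, by rwa [mem_preimage, initL_graphMk]⟩

lemma bottom_lt_top {x' : Esp d} (hx' : x' ∈ ball 0 ρ) : (ℓ - ℓt) x' < ℓ x' :=
  sub_lt_self _ (h.thickness_pos x' (by simpa using hx'))

variable (hw : ContinuousOn w (closure (graphDomain d ρ ℓ ℓt) ∩ initL d ⁻¹' ball 0 ρ))
  (hC : ∀ x ∈ closure (graphDomain d ρ ℓ ℓt) ∩ initL d ⁻¹' ball 0 ρ, |w x| ≤ C)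
include hw

lemma continuousOn_slice {x' : Esp d} (hx' : x' ∈ ball 0 ρ) :
    ContinuousOn (fun a => w (graphMk d x' a)) (Icc ((ℓ - ℓt) x') (ℓ x')) :=
  hw.comp ((continuous_graphMk d).comp (Continuous.prodMk_right x')).continuousOn
    (h.closure_slice_subset hx')

include hC

lemma integrableOn_deriv_rampCutoff_mul {u v : Esp (d + 1) → ℝ} (k : ℕ)
    (hu : ContinuousOn u (graphDomain d ρ ℓ ℓt)) (hu0 : ∀ x ∈ graphDomain d ρ ℓ ℓt, 0 ≤ u x)
    (hv : ContinuousOn v (graphDomain d ρ ℓ ℓt)) :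
    IntegrableOn (fun x => deriv (rampCutoff k) (u x) * rampCutoff k (v x) * w x)
      (graphDomain d ρ ℓ ℓt) := by
  obtain ⟨B, hB⟩ := exists_bound_deriv_rampCutoff k
  have hsub : graphDomain d ρ ℓ ℓt ⊆ closure (graphDomain d ρ ℓ ℓt) ∩ initL d ⁻¹' ball 0 ρ :=
    fun x hx => ⟨subset_closure hx, initL_mem_ball hx⟩
  refine h.integrableOn_of_continuousOn_of_bound (C := B * C)
    ((((continuous_deriv_rampCutoff k).comp_continuousOn hu).mul
      ((contDiff_rampCutoff k).continuous.comp_continuousOn hv)).mul (hw.mono hsub))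
    fun x hx => ?_
  have hB0 := (abs_nonneg _).trans (hB _ (hu0 x hx))
  rw [abs_mul, abs_mul, abs_of_nonneg (rampCutoff_nonneg _ _)]
  exact mul_le_mul ((mul_le_of_le_one_right (abs_nonneg _) (rampCutoff_le_one _ _)).trans
    (hB _ (hu0 x hx))) (hC x (hsub hx)) (abs_nonneg _) hB0

lemma integrableOn_topLayer (k : ℕ) :
    IntegrableOn (fun x => deriv (rampCutoff k) (ℓ (initL d x) - lastL d x) *
      rampCutoff k (lastL d x - (ℓ - ℓt) (initL d x)) * w x) (graphDomain d ρ ℓ ℓt) :=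
  h.integrableOn_deriv_rampCutoff_mul hw hC k
    ((contDiffOn_comp_initL h.contDiffOn_top).continuousOn.sub (lastL d).continuous.continuousOn)
    (fun _ hx => (sub_pos.2 (mem_graphDomain.1 hx).2.2).le)
    ((lastL d).continuous.continuousOn.sub (contDiffOn_comp_initL h.contDiffOn_bottom).continuousOn)

lemma integrableOn_bottomLayer (k : ℕ) :
    IntegrableOn (fun x => deriv (rampCutoff k) (lastL d x - (ℓ - ℓt) (initL d x)) *
      rampCutoff k (ℓ (initL d x) - lastL d x) * w x) (graphDomain d ρ ℓ ℓt) :=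
  h.integrableOn_deriv_rampCutoff_mul hw hC k
    ((lastL d).continuous.continuousOn.sub (contDiffOn_comp_initL h.contDiffOn_bottom).continuousOn)
    (fun _ hx => (sub_pos.2 (mem_graphDomain.1 hx).2.1).le)
    ((contDiffOn_comp_initL h.contDiffOn_top).continuousOn.sub (lastL d).continuous.continuousOn)

lemma tendsto_setIntegral_topLayer :
    Tendsto (fun k : ℕ => ∫ x in graphDomain d ρ ℓ ℓt,
        deriv (rampCutoff k) (ℓ (initL d x) - lastL d x) *
          rampCutoff k (lastL d x - (ℓ - ℓt) (initL d x)) * w x) atTop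
      (𝓝 (∫ x' in ball (0 : Esp d) ρ, w (graphMk d x' (ℓ x')))) := by
  refine tendsto_setIntegral_graphDomain_of_slices (C := C) h.isOpen.measurableSet
    (h.integrableOn_topLayer hw hC) (fun k x' hx' => ?_) fun x' hx' => ?_
  · simp only [initL_graphMk, lastL_graphMk]
    exact abs_setIntegral_rampCutoff_sub_left_le (h.bottom_lt_top hx') k fun a ha =>
      hC _ (h.closure_slice_subset hx' (Ioo_subset_Icc_self ha))
  · simp only [initL_graphMk, lastL_graphMk]
    exact tendsto_setIntegral_rampCutoff_sub_left (h.bottom_lt_top hx')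
      (h.continuousOn_slice hw hx')

lemma tendsto_setIntegral_bottomLayer :
    Tendsto (fun k : ℕ => ∫ x in graphDomain d ρ ℓ ℓt,
        deriv (rampCutoff k) (lastL d x - (ℓ - ℓt) (initL d x)) *
          rampCutoff k (ℓ (initL d x) - lastL d x) * w x) atTop
      (𝓝 (∫ x' in ball (0 : Esp d) ρ, w (graphMk d x' ((ℓ - ℓt) x')))) := by
  refine tendsto_setIntegral_graphDomain_of_slices (C := C) h.isOpen.measurableSet
    (h.integrableOn_bottomLayer hw hC) (fun k x' hx' => ?_) fun x' hx' => ?_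
  · simp only [initL_graphMk, lastL_graphMk]
    exact abs_setIntegral_rampCutoff_sub_right_le (h.bottom_lt_top hx') k fun a ha =>
      hC _ (h.closure_slice_subset hx' (Ioo_subset_Icc_self ha))
  · simp only [initL_graphMk, lastL_graphMk]
    exact tendsto_setIntegral_rampCutoff_sub_right (h.bottom_lt_top hx')
      (h.continuousOn_slice hw hx')

end IsGraphProfile

namespace IsGraphProfile

variable (h : IsGraphProfile ρ ℓ ℓt) {V : Esp (d + 1) → Esp (d + 1)}
include h

lemma setIntegral_graphCutoff_mul_divergence (hV : ContDiffOn ℝ 1 V (graphDomain d ρ ℓ ℓt))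
    (hdiv : IntegrableOn (divergence V) (graphDomain d ρ ℓ ℓt)) (k : ℕ) :
    ∫ x in graphDomain d ρ ℓ ℓt, graphCutoff d ℓ ℓt k x * divergence V x =
      -∫ x in graphDomain d ρ ℓ ℓt, fderiv ℝ (graphCutoff d ℓ ℓt k) x (V x) := by
  have hη := h.contDiffOn_graphCutoff (d := d) k
  obtain ⟨hint, hzero⟩ := setIntegral_divergence_eq_zero h.isOpen (h.isCompact_graphCore k)
    (h.graphCore_subset k) (hη.smul hV) fun x hx hxK => by
      rw [Pi.smul_apply', graphCutoff_eq_zero hx hxK, zero_smul]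
  have hleft : IntegrableOn (fun x => graphCutoff d ℓ ℓt k x * divergence V x)
      (graphDomain d ρ ℓ ℓt) :=
    hdiv.bdd_mul (hη.continuousOn.aestronglyMeasurable h.isOpen.measurableSet)
      (.of_forall fun x => abs_graphCutoff_le_one k x)
  have hprod : EqOn (divergence fun x => graphCutoff d ℓ ℓt k x • V x)
      (fun x => graphCutoff d ℓ ℓt k x * divergence V x +
        fderiv ℝ (graphCutoff d ℓ ℓt k) x (V x)) (graphDomain d ρ ℓ ℓt) := fun x hx =>
    divergence_smul
      ((hη.contDiffAt (h.isOpen.mem_nhds hx)).differentiableAt one_ne_zero)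
      ((hV.contDiffAt (h.isOpen.mem_nhds hx)).differentiableAt one_ne_zero)
  have hright : IntegrableOn (fun x => fderiv ℝ (graphCutoff d ℓ ℓt k) x (V x))
      (graphDomain d ρ ℓ ℓt) :=
    ((hint.congr_fun hprod h.isOpen.measurableSet).sub hleft).congr
      (.of_forall fun x => by simp)
  rw [eq_neg_iff_add_eq_zero, ← integral_add hleft hright, ← hzero]
  exact (setIntegral_congr_fun h.isOpen.measurableSet hprod).symm

lemma tendsto_setIntegral_graphCutoff_mul {f : Esp (d + 1) → ℝ}
    (hf : IntegrableOn f (graphDomain d ρ ℓ ℓt)) :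
    Tendsto (fun k : ℕ => ∫ x in graphDomain d ρ ℓ ℓt, graphCutoff d ℓ ℓt k x * f x) atTop
      (𝓝 (∫ x in graphDomain d ρ ℓ ℓt, f x)) := by
  refine tendsto_integral_of_dominated_convergence (fun x => ‖f x‖) (fun k => ?_) hf.norm
    (fun k => .of_forall fun x => ?_) (ae_restrict_of_forall_mem h.isOpen.measurableSet
      fun x hx => ?_)
  · exact ((h.contDiffOn_graphCutoff k).continuousOn.aestronglyMeasurable
      h.isOpen.measurableSet).mul hf.aestronglyMeasurable
  · rw [norm_mul]
    exact mul_le_of_le_one_left (norm_nonneg _) (abs_graphCutoff_le_one k x)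
  · simpa using (tendsto_graphCutoff hx).mul_const (f x)

theorem integral_divergence (hV : ContinuousOn V (closure (graphDomain d ρ ℓ ℓt)))
    (hV1 : ContDiffOn ℝ 1 V (graphDomain d ρ ℓ ℓt))
    (hdiv : IntegrableOn (divergence V) (graphDomain d ρ ℓ ℓt)) :
    ∫ x in graphDomain d ρ ℓ ℓt, divergence V x =
      (∫ x' in ball (0 : Esp d) ρ, ⟪V (graphMk d x' (ℓ x')), nuUp d ℓ x'⟫ * omegaW d ℓ x') +
        ∫ x' in ball (0 : Esp d) ρ, ⟪V (graphMk d x' ((ℓ - ℓt) x')), nuDown d (ℓ - ℓt) x'⟫ *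
          omegaW d (ℓ - ℓt) x' := by
  have htop := continuousOn_graphFlux h.contDiffOn_top hV
  have hbot := continuousOn_graphFlux h.contDiffOn_bottom hV
  obtain ⟨A, hA⟩ := exists_abs_graphFlux_le h.radius_pos h.contDiffOn_top h.isCompact_closure hV
  obtain ⟨B, hB⟩ :=
    exists_abs_graphFlux_le h.radius_pos h.contDiffOn_bottom h.isCompact_closure hV
  have hlayers := (h.tendsto_setIntegral_topLayer htop hA).sub
    (h.tendsto_setIntegral_bottomLayer hbot hB)
  refine (tendsto_nhds_unique (h.tendsto_setIntegral_graphCutoff_mul hdiv)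
    (hlayers.congr fun k => ?_)).trans ?_
  · rw [h.setIntegral_graphCutoff_mul_divergence hV1 hdiv,
      ← integral_sub (h.integrableOn_topLayer htop hA k) (h.integrableOn_bottomLayer hbot hB k),
      ← integral_neg]
    refine setIntegral_congr_fun h.isOpen.measurableSet fun x hx => ?_
    simp only [fderiv_graphCutoff_apply h k hx V, neg_sub]
  · simp only [graphFlux, initL_graphMk, nuDown_eq_neg_nuUp, inner_neg_right, neg_mul,
      integral_neg, sub_eq_add_neg]

end IsGraphProfile

end DivergenceTheorem

lemma aestronglyMeasurable_of_continuousOn {X : Type*} [TopologicalSpace X] [MeasurableSpace X]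
    [OpensMeasurableSpace X] {μ : Measure X} {K : Set X} {c : X → ℝ} (hK : MeasurableSet K)
    (hμ : ∀ᵐ x ∂μ, x ∈ K) (hc : ContinuousOn c K) : AEStronglyMeasurable c μ := by
  rw [← Measure.restrict_eq_self_of_ae_mem hμ]
  exact hc.aestronglyMeasurable hK

lemma integrable_of_continuousOn_isCompact {X : Type*} [TopologicalSpace X] [T2Space X]
    [MeasurableSpace X] [OpensMeasurableSpace X] {μ : Measure X} [IsFiniteMeasure μ] {K : Set X}
    {c : X → ℝ} (hK : IsCompact K) (hμ : ∀ᵐ x ∂μ, x ∈ K) (hc : ContinuousOn c K) :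
    Integrable c μ := by
  obtain ⟨C, hC⟩ := hK.exists_bound_of_continuousOn hc
  exact .of_bound (aestronglyMeasurable_of_continuousOn hK.measurableSet hμ hc) C (hμ.mono hC)

section GraphMeasure

variable {d : ℕ} {ρ M : ℝ} {ℓ ℓt : Esp d → ℝ}

/-- The surface measure of the graph of `m` over the ball of radius `ρ`. -/
def graphMeasure (d : ℕ) (ρ : ℝ) (m : Esp d → ℝ) : Measure (Esp (d + 1)) :=
  ((volume.restrict (ball 0 ρ)).withDensity fun x' => ENNReal.ofReal (omegaW d m x')).map
    fun x' => graphMk d x' (m x')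

namespace IsGraphProfile

variable (h : IsGraphProfile ρ ℓ ℓt) {c : Esp (d + 1) → ℝ}
include h

lemma continuousOn_graphMk_top : ContinuousOn (fun x' => graphMk d x' (ℓ x')) (ball 0 ρ) :=
  (continuous_graphMk d).comp_continuousOn
    (continuousOn_id.prodMk (h.contDiffOn_top.continuousOn.mono ball_subset_closedBall))

lemma aemeasurable_graphMk_top : AEMeasurable (fun x' => graphMk d x' (ℓ x'))
    ((volume.restrict (ball 0 ρ)).withDensity fun x' => ENNReal.ofReal (omegaW d ℓ x')) :=
  (h.continuousOn_graphMk_top.aemeasurable measurableSet_ball).mono_ac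
    (withDensity_absolutelyContinuous _ _)

lemma aestronglyMeasurable_omegaW_top :
    AEStronglyMeasurable (omegaW d ℓ) (volume.restrict (ball 0 ρ)) :=
  (continuousOn_omegaW h.contDiffOn_top).aestronglyMeasurable measurableSet_ball

lemma integrableOn_omegaW_top : IntegrableOn (omegaW d ℓ) (ball 0 ρ) := by
  obtain ⟨C, hC⟩ := exists_omegaW_le h.radius_pos h.contDiffOn_top
  have : IsFiniteMeasure (volume.restrict (ball (0 : Esp d) ρ)) :=
    isFiniteMeasure_restrict.2 measure_ball_lt_top.ne
  refine Integrable.of_bound h.aestronglyMeasurable_omegaW_top C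
    (ae_restrict_of_forall_mem measurableSet_ball fun x' hx' => ?_)
  rw [Real.norm_of_nonneg (omegaW_pos d ℓ x').le]
  exact hC x' hx'

lemma isFiniteMeasure_graphMeasure : IsFiniteMeasure (graphMeasure d ρ ℓ) := by
  have := isFiniteMeasure_withDensity_ofReal h.integrableOn_omegaW_top.hasFiniteIntegral
  exact Measure.isFiniteMeasure_map _ _

lemma ae_graphMeasure_mem_closure :
    ∀ᵐ x ∂graphMeasure d ρ ℓ, x ∈ closure (graphDomain d ρ ℓ ℓt) := by
  refine (ae_map_iff h.aemeasurable_graphMk_top isClosed_closure.measurableSet).2 ?_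
  refine withDensity_absolutelyContinuous _ _ ?_
  exact ae_restrict_of_forall_mem measurableSet_ball fun x' => h.graphMk_top_mem_closure

variable (hc : ContinuousOn c (closure (graphDomain d ρ ℓ ℓt)))
include hc

lemma integral_graphMeasure : ∫ x, c x ∂graphMeasure d ρ ℓ =
    ∫ x' in ball (0 : Esp d) ρ, c (graphMk d x' (ℓ x')) * omegaW d ℓ x' := by
  rw [graphMeasure, integral_map h.aemeasurable_graphMk_top
      (aestronglyMeasurable_of_continuousOn isClosed_closure.measurableSet
        h.ae_graphMeasure_mem_closure hc),
    integral_withDensity_eq_integral_toReal_smul₀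
      h.aestronglyMeasurable_omegaW_top.aemeasurable.ennreal_ofReal (by simp)]
  simp only [ENNReal.toReal_ofReal (omegaW_pos d ℓ _).le, smul_eq_mul, mul_comm]

lemma integrableOn_graphMk_top_mul_omegaW :
    IntegrableOn (fun x' => c (graphMk d x' (ℓ x')) * omegaW d ℓ x') (ball 0 ρ) := by
  obtain ⟨C, hC⟩ := h.isCompact_closure.exists_bound_of_continuousOn hc
  exact h.integrableOn_omegaW_top.bdd_mul
    ((hc.comp h.continuousOn_graphMk_top
      fun _ => h.graphMk_top_mem_closure).aestronglyMeasurable measurableSet_ball)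
    (ae_restrict_of_forall_mem measurableSet_ball
      fun _ hx' => hC _ (h.graphMk_top_mem_closure hx'))

end IsGraphProfile

end GraphMeasure

section Transport

variable {d : ℕ} {ρ M : ℝ} {ℓ ℓt : Esp d → ℝ} {H : Esp (d + 1) → Esp (d + 1)}
  {g : Esp (d + 1) → ℝ}

namespace IsGraphProfile

variable (h : IsGraphProfile ρ ℓ ℓt)
include h

lemma setIntegral_inner_nuUp_le (hg : ContinuousOn g (closure (graphDomain d ρ ℓ ℓt)))
    (hg0 : ∀ x ∈ closure (graphDomain d ρ ℓ ℓt), 0 ≤ g x)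
    (hHM : ∀ x ∈ closure (graphDomain d ρ ℓ ℓt), ‖H x‖ ≤ M) :
    ∫ x' in ball (0 : Esp d) ρ,
        ⟪g (graphMk d x' (ℓ x')) • H (graphMk d x' (ℓ x')), nuUp d ℓ x'⟫ * omegaW d ℓ x' ≤
      M * ∫ x, g x ∂graphMeasure d ρ ℓ := by
  rw [h.integral_graphMeasure hg, ← integral_const_mul]
  refine (Real.le_norm_self _).trans (norm_integral_le_of_norm_le
    ((h.integrableOn_graphMk_top_mul_omegaW hg).const_mul M)
    (ae_restrict_of_forall_mem measurableSet_ball fun x' hx' => ?_))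
  have hx := h.graphMk_top_mem_closure hx'
  refine (abs_inner_nuUp_mul_omegaW_le d ℓ x' _).trans ?_
  rw [norm_smul, Real.norm_of_nonneg (hg0 _ hx), mul_comm (g _), mul_assoc]
  exact mul_le_mul_of_nonneg_right (hHM _ hx) (mul_nonneg (hg0 _ hx) (omegaW_pos d ℓ x').le)

lemma setIntegral_inner_nuDown_nonpos
    (hg0 : ∀ x ∈ closure (graphDomain d ρ ℓ ℓt), 0 ≤ g x)
    (hinflow : ∀ x' ∈ ball (0 : Esp d) ρ,
      ⟪H (graphMk d x' ((ℓ - ℓt) x')), nuDown d (ℓ - ℓt) x'⟫ ≤ 0) :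
    ∫ x' in ball (0 : Esp d) ρ,
        ⟪g (graphMk d x' ((ℓ - ℓt) x')) • H (graphMk d x' ((ℓ - ℓt) x')), nuDown d (ℓ - ℓt) x'⟫ *
          omegaW d (ℓ - ℓt) x' ≤ 0 := by
  refine setIntegral_nonpos measurableSet_ball fun x' hx' => mul_nonpos_of_nonpos_of_nonneg ?_
    (omegaW_pos d _ x').le
  rw [real_inner_smul_left]
  exact mul_nonpos_of_nonneg_of_nonpos (hg0 _ (h.graphMk_mem_closure hx'
    (left_mem_Icc.2 (h.bottom_lt_top hx').le))) (hinflow x' hx')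

theorem setIntegral_fderiv_le {U : Set (Esp (d + 1))} (hU : IsOpen U)
    (hDU : closure (graphDomain d ρ ℓ ℓt) ⊆ U) (hH : ContDiffOn ℝ 1 H U)
    (hHM : ∀ x ∈ U, ‖H x‖ ≤ M) (hDH : ∀ x ∈ U, ‖fderiv ℝ H x‖ ≤ M)
    (hinflow : ∀ x' ∈ ball (0 : Esp d) ρ,
      ⟪H (graphMk d x' ((ℓ - ℓt) x')), nuDown d (ℓ - ℓt) x'⟫ ≤ 0)
    (hg : ContinuousOn g (closure (graphDomain d ρ ℓ ℓt)))
    (hg0 : ∀ x ∈ closure (graphDomain d ρ ℓ ℓt), 0 ≤ g x)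
    (hg1 : ContDiffOn ℝ 1 g (graphDomain d ρ ℓ ℓt))
    (hgH : IntegrableOn (fun x => fderiv ℝ g x (H x)) (graphDomain d ρ ℓ ℓt)) :
    ∫ x in graphDomain d ρ ℓ ℓt, fderiv ℝ g x (H x) ≤
      M * (∫ x, g x ∂graphMeasure d ρ ℓ) +
        (d + 1) * M * ∫ x in graphDomain d ρ ℓ ℓt, g x := by
  set D := graphDomain d ρ ℓ ℓt
  have hDm : MeasurableSet D := h.isOpen.measurableSet
  have hDU' : D ⊆ U := subset_closure.trans hDU
  have hgint : IntegrableOn g D := (hg.integrableOn_compact h.isCompact_closure).mono_set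
    subset_closure
  have hdiv_le {x} (hx : x ∈ D) : |divergence H x| ≤ (d + 1) * M := by
    simpa using abs_divergence_le (hDH x (hDU' hx))
  have hgdiv : IntegrableOn (fun x => g x * divergence H x) D :=
    hgint.mul_bdd ((continuousOn_divergence (hH.mono hDU') h.isOpen).aestronglyMeasurable hDm)
      (ae_restrict_of_forall_mem hDm fun x => hdiv_le)
  have hprod : EqOn (divergence fun x => g x • H x)
      (fun x => g x * divergence H x + fderiv ℝ g x (H x)) D := fun x hx => divergence_smul
    ((hg1.contDiffAt (h.isOpen.mem_nhds hx)).differentiableAt one_ne_zero)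
    ((hH.contDiffAt (hU.mem_nhds (hDU' hx))).differentiableAt one_ne_zero)
  have hflux := h.integral_divergence (hg.smul (hH.continuousOn.mono hDU))
    (hg1.smul (hH.mono hDU')) ((hgdiv.add hgH).congr_fun hprod.symm hDm)
  have hbottom := h.setIntegral_inner_nuDown_nonpos hg0 hinflow
  have htop := h.setIntegral_inner_nuUp_le hg hg0 fun x hx => hHM x (hDU hx)
  have hbulk : -∫ x in D, g x * divergence H x ≤ (d + 1) * M * ∫ x in D, g x := by
    rw [← integral_neg, ← integral_const_mul]
    refine setIntegral_mono_on hgdiv.neg (hgint.const_mul _) hDm fun x hx => ?_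
    rw [← mul_neg, mul_comm]
    exact mul_le_mul_of_nonneg_right ((neg_le_abs _).trans (hdiv_le hx))
      (hg0 x (subset_closure hx))
  have hsplit := (setIntegral_congr_fun hDm hprod).symm.trans hflux
  rw [integral_add hgdiv hgH] at hsplit
  simp only [Pi.smul_apply'] at hsplit
  linarith

end IsGraphProfile

end Transport

section TimeDerivative

open Topology

/-- The time derivative on `[0, T]` of a function of space and time, one-sided at the end points
of the interval. -/
def timeDeriv {α : Type*} (T : ℝ) (y : α → ℝ → ℝ) (x : α) (t : ℝ) : ℝ :=
  derivWithin (y x) (Icc 0 T) t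

lemma timeDeriv_eq_deriv {α : Type*} {y : α → ℝ → ℝ} {x : α} {t T : ℝ} (ht : t ∈ Ioo 0 T) :
    timeDeriv T y x t = deriv (y x) t :=
  derivWithin_of_mem_nhds (Icc_mem_nhds ht.1 ht.2)

lemma prod_Icc_mem_nhds {X : Type*} [TopologicalSpace X] {D : Set X} {x : X} {t T : ℝ}
    (hD : IsOpen D) (hx : x ∈ D) (ht : t ∈ Ioo 0 T) : D ×ˢ Icc 0 T ∈ 𝓝 (x, t) :=
  prod_mem_nhds (hD.mem_nhds hx) (Icc_mem_nhds ht.1 ht.2)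

variable {E : Type*} [NormedAddCommGroup E] [NormedSpace ℝ E] {T t : ℝ} {S D : Set E} {x : E}
  {y : E → ℝ → ℝ} {A : E × ℝ →L[ℝ] ℝ}

lemma hasDerivWithinAt_time_slice (hx : x ∈ S)
    (hA : HasFDerivWithinAt (fun q : E × ℝ => y q.1 q.2) A (S ×ˢ Icc 0 T) (x, t)) :
    HasDerivWithinAt (y x) (A (0, 1)) (Icc 0 T) t :=
  hA.comp_hasDerivWithinAt (f := fun τ : ℝ => (x, τ)) t
    ((hasDerivWithinAt_const t _ x).prodMk (hasDerivWithinAt_id t _)) fun _ hτ => ⟨hx, hτ⟩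

lemma hasFDerivWithinAt_space_slice (ht : t ∈ Icc 0 T)
    (hA : HasFDerivWithinAt (fun q : E × ℝ => y q.1 q.2) A (S ×ˢ Icc 0 T) (x, t)) :
    HasFDerivWithinAt (fun z => y z t) (A ∘L ContinuousLinearMap.inl ℝ E ℝ) S x :=
  HasFDerivWithinAt.comp (f := fun z : E => (z, t)) x hA
    ((hasFDerivWithinAt_id x S).prodMk (hasFDerivWithinAt_const t x S)) fun _ hz => ⟨hz, ht⟩

lemma timeDeriv_eq_of_hasFDerivWithinAt (hT : 0 < T) {q : E × ℝ} (hq : q ∈ S ×ˢ Icc 0 T)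
    (hA : HasFDerivWithinAt (fun q : E × ℝ => y q.1 q.2) A (S ×ˢ Icc 0 T) q) :
    timeDeriv T y q.1 q.2 = A (0, 1) :=
  (hasDerivWithinAt_time_slice hq.1 hA).derivWithin (uniqueDiffOn_Icc hT _ hq.2)

lemma hasDerivWithinAt_timeDeriv
    (hy : ContDiffOn ℝ 1 (fun q : E × ℝ => y q.1 q.2) (S ×ˢ Icc 0 T)) (hx : x ∈ S)
    (ht : t ∈ Icc 0 T) : HasDerivWithinAt (y x) (timeDeriv T y x t) (Icc 0 T) t :=
  (hasDerivWithinAt_time_slice hx (hy.differentiableOn one_ne_zero (x, t)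
    ⟨hx, ht⟩).hasFDerivWithinAt).differentiableWithinAt.hasDerivWithinAt

lemma hasDerivAt_timeDeriv (hy : ContDiffOn ℝ 1 (fun q : E × ℝ => y q.1 q.2) (S ×ˢ Icc 0 T))
    (hx : x ∈ S) (ht : t ∈ Ioo 0 T) : HasDerivAt (y x) (timeDeriv T y x t) t :=
  (hasDerivWithinAt_timeDeriv hy hx (Ioo_subset_Icc_self ht)).hasDerivAt
    (Icc_mem_nhds ht.1 ht.2)

lemma contDiffOn_timeDeriv (hT : 0 < T) {n : ℕ}
    (hy : ContDiffOn ℝ (n + 1) (fun q : E × ℝ => y q.1 q.2) (S ×ˢ Icc 0 T)) :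
    ContDiffOn ℝ n (fun q : E × ℝ => timeDeriv T y q.1 q.2) (S ×ˢ Icc 0 T) := by
  intro q hq
  obtain ⟨u, hu, hus, -, f', hf', hf'c⟩ :=
    (contDiffWithinAt_succ_iff_hasFDerivWithinAt' (by simp)).1 (hy q hq)
  rw [insert_eq_of_mem hq] at hu hus
  refine (hf'c.clm_apply (contDiffWithinAt_const (c := ((0 : E), (1 : ℝ))))).congr_of_eventuallyEq
    ?_ (timeDeriv_eq_of_hasFDerivWithinAt hT hq (hf' q (mem_of_mem_nhdsWithin hq hu)))
  filter_upwards [hu] with p hp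
  exact timeDeriv_eq_of_hasFDerivWithinAt hT (hus hp) (hf' p hp)

section Interior

variable (hD : IsOpen D) (hx : x ∈ D)
include hD hx

lemma hasFDerivAt_uncurry (hy : ContDiffOn ℝ 1 (fun q : E × ℝ => y q.1 q.2) (D ×ˢ Icc 0 T))
    (ht : t ∈ Ioo 0 T) : HasFDerivAt (fun q : E × ℝ => y q.1 q.2)
      (fderiv ℝ (fun q : E × ℝ => y q.1 q.2) (x, t)) (x, t) :=
  ((hy.contDiffAt (prod_Icc_mem_nhds hD hx ht)).differentiableAt one_ne_zero).hasFDerivAt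

lemma timeDeriv_eq_fderiv_uncurry
    (hy : ContDiffOn ℝ 1 (fun q : E × ℝ => y q.1 q.2) (D ×ˢ Icc 0 T)) (ht : t ∈ Ioo 0 T) :
    timeDeriv T y x t = fderiv ℝ (fun q : E × ℝ => y q.1 q.2) (x, t) (0, 1) :=
  timeDeriv_eq_of_hasFDerivWithinAt (ht.1.trans ht.2) (q := (x, t))
    ⟨hx, Ioo_subset_Icc_self ht⟩ (hasFDerivAt_uncurry hD hx hy ht).hasFDerivWithinAt

lemma fderiv_space_slice (hy : ContDiffOn ℝ 1 (fun q : E × ℝ => y q.1 q.2) (D ×ˢ Icc 0 T))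
    (ht : t ∈ Ioo 0 T) (v : E) : fderiv ℝ (fun z => y z t) x v =
      fderiv ℝ (fun q : E × ℝ => y q.1 q.2) (x, t) (v, 0) := by
  rw [((hasFDerivWithinAt_space_slice (Ioo_subset_Icc_self ht)
    (hasFDerivAt_uncurry hD hx hy ht).hasFDerivWithinAt).hasFDerivAt (hD.mem_nhds hx)).fderiv]
  rfl

lemma hasDerivAt_fderiv_space_slice
    (hy : ContDiffOn ℝ 2 (fun q : E × ℝ => y q.1 q.2) (D ×ˢ Icc 0 T)) (ht : t ∈ Ioo 0 T)
    (v : E) : HasDerivAt (fun τ => fderiv ℝ (fun z => y z τ) x v)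
      (fderiv ℝ (fun z => timeDeriv T y z t) x v) t := by
  set F := fderiv ℝ fun q : E × ℝ => y q.1 q.2
  have hyx : ContDiffAt ℝ 2 (fun q : E × ℝ => y q.1 q.2) (x, t) :=
    hy.contDiffAt (prod_Icc_mem_nhds hD hx ht)
  have hF : HasFDerivAt F (fderiv ℝ F (x, t)) (x, t) :=
    ((hyx.fderiv_right (m := 1) le_rfl).differentiableAt one_ne_zero).hasFDerivAt
  have htime : HasDerivAt (fun τ => F (x, τ) (v, 0)) (fderiv ℝ F (x, t) (0, 1) (v, 0)) t :=
    (ContinuousLinearMap.apply ℝ ℝ (v, (0 : ℝ))).hasFDerivAt.comp_hasDerivAt t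
      (hF.comp_hasDerivAt t ((hasDerivAt_const t x).prodMk (hasDerivAt_id t)))
  have hspace : HasFDerivAt (fun z => F (z, t) (0, 1))
      ((ContinuousLinearMap.apply ℝ ℝ ((0 : E), (1 : ℝ))) ∘L
        (fderiv ℝ F (x, t) ∘L ContinuousLinearMap.inl ℝ E ℝ)) x :=
    (ContinuousLinearMap.apply ℝ ℝ ((0 : E), (1 : ℝ))).hasFDerivAt.comp x
      (HasFDerivAt.comp (f := fun z : E => (z, t)) x hF
        ((hasFDerivAt_id x).prodMk (hasFDerivAt_const t x)))
  have hmixed : fderiv ℝ (fun z => timeDeriv T y z t) x v = fderiv ℝ F (x, t) (0, 1) (v, 0) := by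
    rw [(hspace.congr_of_eventuallyEq (Filter.eventually_of_mem (hD.mem_nhds hx) fun z hz =>
      timeDeriv_eq_fderiv_uncurry hD hz (hy.of_le one_le_two) ht)).fderiv]
    exact (hyx.isSymmSndFDerivAt (by simp)) (v, 0) (0, 1)
  rw [hmixed]
  exact htime.congr_of_eventuallyEq (Filter.eventually_of_mem (isOpen_Ioo.mem_nhds ht)
    fun τ hτ => fderiv_space_slice hD hx (hy.of_le one_le_two) hτ v)

end Interior

section Transport

variable {H : E → E} {p f : E → ℝ} {R : E → ℝ → ℝ} (hT : 0 < T) (hD : IsOpen D)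
  (hy : ContDiffOn ℝ 2 (fun q : E × ℝ => y q.1 q.2) (D ×ˢ Icc 0 T))
  (hpde : ∀ x ∈ D, ∀ t ∈ Ioo 0 T,
    deriv (y x) t + fderiv ℝ (fun z => y z t) x (H x) + p x * y x t = R x t * f x)
include hD hy hpde

lemma timeDeriv_transport (hR : ContDiffOn ℝ 1 (fun q : E × ℝ => R q.1 q.2) (D ×ˢ Icc 0 T))
    (hx : x ∈ D) (ht : t ∈ Ioo 0 T) :
    timeDeriv T (timeDeriv T y) x t + fderiv ℝ (fun z => timeDeriv T y z t) x (H x) +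
      p x * timeDeriv T y x t = timeDeriv T R x t * f x := by
  have hy1 : ContDiffOn ℝ 1 (fun q : E × ℝ => y q.1 q.2) (D ×ˢ Icc 0 T) := hy.of_le one_le_two
  have hleft := ((hasDerivAt_timeDeriv
    (contDiffOn_timeDeriv (n := 1) (ht.1.trans ht.2) hy) hx ht).add
    (hasDerivAt_fderiv_space_slice hD hx hy ht (H x))).add
    ((hasDerivAt_timeDeriv hy1 hx ht).const_mul (p x))
  have hright := (hasDerivAt_timeDeriv hR hx ht).mul_const (f x)
  refine hleft.unique (hright.congr_of_eventuallyEq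
    (Filter.eventually_of_mem (isOpen_Ioo.mem_nhds ht) fun τ hτ => ?_))
  simp only [Pi.add_apply, timeDeriv_eq_deriv hτ, hpde x hx τ hτ]

include hT

lemma timeDeriv_zero (hR : ContinuousOn (fun q : E × ℝ => R q.1 q.2) (D ×ˢ Icc 0 T))
    (hy0 : ∀ x ∈ D, y x 0 = 0) (hx : x ∈ D) : timeDeriv T y x 0 = R x 0 * f x := by
  set A := fderivWithin ℝ (fun q : E × ℝ => y q.1 q.2) (D ×ˢ Icc 0 T)
  have hA {τ} (hτ : τ ∈ Icc 0 T) :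
      HasFDerivWithinAt (fun q : E × ℝ => y q.1 q.2) (A (x, τ)) (D ×ˢ Icc 0 T) (x, τ) :=
    (hy.differentiableOn two_ne_zero (x, τ) ⟨hx, hτ⟩).hasFDerivWithinAt
  have htime {τ} (hτ : τ ∈ Icc 0 T) : timeDeriv T y x τ = A (x, τ) (0, 1) :=
    timeDeriv_eq_of_hasFDerivWithinAt hT (q := (x, τ)) ⟨hx, hτ⟩ (hA hτ)
  have hspace {τ} (hτ : τ ∈ Icc 0 T) : fderiv ℝ (fun z => y z τ) x (H x) = A (x, τ) (H x, 0) := by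
    rw [((hasFDerivWithinAt_space_slice hτ (hA hτ)).hasFDerivAt (hD.mem_nhds hx)).fderiv]
    rfl
  have hmaps : MapsTo (fun τ : ℝ => (x, τ)) (Icc 0 T) (D ×ˢ Icc 0 T) := fun τ hτ => ⟨hx, hτ⟩
  have hAc : ContinuousOn (fun τ => A (x, τ)) (Icc 0 T) :=
    (hy.continuousOn_fderivWithin (hD.uniqueDiffOn.prod (uniqueDiffOn_Icc hT))
      one_le_two).comp (by fun_prop) hmaps
  have hequation : EqOn (fun τ => A (x, τ) (0, 1) + A (x, τ) (H x, 0) + p x * y x τ)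
      (fun τ => R x τ * f x) (Icc 0 T) := by
    refine EqOn.of_subset_closure (s := Ioo 0 T) (fun τ hτ => ?_)
      (((hAc.clm_apply continuousOn_const).add (hAc.clm_apply continuousOn_const)).add
        (continuousOn_const.mul (hy.continuousOn.comp (by fun_prop) hmaps)))
      ((hR.comp (by fun_prop) hmaps).mul continuousOn_const) Ioo_subset_Icc_self
      (closure_Ioo hT.ne).ge
    have hτ' := Ioo_subset_Icc_self hτ
    rw [← htime hτ', ← hspace hτ', timeDeriv_eq_deriv hτ, hpde x hx τ hτ]
  have h0 : (0 : ℝ) ∈ Icc 0 T := left_mem_Icc.2 hT.le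
  have hgrad : fderiv ℝ (fun z => y z 0) x = 0 := by
    rw [(Filter.eventuallyEq_of_mem (hD.mem_nhds hx) hy0 : (fun z => y z 0) =ᶠ[𝓝 x]
      fun _ => 0).fderiv_eq, fderiv_fun_const, Pi.zero_apply]
  simpa [← htime h0, ← hspace h0, hgrad, hy0 x hx] using hequation h0

end Transport

end TimeDerivative

section Cylinder

variable {X : Type*} [TopologicalSpace X] {T t : ℝ} {K : Set X} {x : X} {F : X → ℝ → ℝ}
  (hF : ContinuousOn (fun q : X × ℝ => F q.1 q.2) (K ×ˢ Icc 0 T))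
include hF

lemma continuousOn_space_slice (ht : t ∈ Icc 0 T) : ContinuousOn (fun x => F x t) K :=
  hF.comp (f := fun x => (x, t)) (by fun_prop) fun _ hx => ⟨hx, ht⟩

lemma continuousOn_time_slice (hx : x ∈ K) : ContinuousOn (F x) (Icc 0 T) :=
  hF.comp (f := fun t => (x, t)) (by fun_prop) fun _ ht => ⟨hx, ht⟩

variable [T2Space X] [MeasurableSpace X] [OpensMeasurableSpace X] {μ : Measure X}
  [IsFiniteMeasure μ] (hK : IsCompact K) (hμ : ∀ᵐ x ∂μ, x ∈ K)
include hK hμ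

lemma integrable_space_slice (ht : t ∈ Icc 0 T) : Integrable (fun x => F x t) μ :=
  integrable_of_continuousOn_isCompact hK hμ (continuousOn_space_slice hF ht)

lemma integrable_cylinder :
    Integrable (fun q : X × ℝ => F q.1 q.2) (μ.prod (volume.restrict (Ioo 0 T))) := by
  refine integrable_of_continuousOn_isCompact (hK.prod isCompact_Icc) ?_ hF
  filter_upwards [Measure.quasiMeasurePreserving_fst.ae hμ,
    Measure.quasiMeasurePreserving_snd.ae (ae_restrict_mem measurableSet_Ioo)] with q hq₁ hq₂
  exact ⟨hq₁, Ioo_subset_Icc_self hq₂⟩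

lemma integrableOn_integral_space : IntegrableOn (fun t => ∫ x, F x t ∂μ) (Ioo 0 T) :=
  (integrable_cylinder hF hK hμ).integral_prod_right

lemma integral_setIntegral_swap :
    ∫ x, (∫ t in Ioo 0 T, F x t) ∂μ = ∫ t in Ioo 0 T, ∫ x, F x t ∂μ :=
  integral_integral_swap (integrable_cylinder hF hK hμ)

end Cylinder

lemma mul_eq_setIntegral_sub_mul_deriv {T : ℝ} (hT : 0 ≤ T) {z z' : ℝ → ℝ}
    (hz : ∀ t ∈ Icc 0 T, HasDerivWithinAt z (z' t) (Icc 0 T) t) (hz' : ContinuousOn z' (Icc 0 T)) :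
    T * z 0 = ∫ t in Ioo 0 T, (z t - (T - t) * z' t) := by
  have hzc : ContinuousOn z (Icc 0 T) := fun t ht => (hz t ht).continuousWithinAt
  have hc : ContinuousOn (fun t => z t - (T - t) * z' t) (Icc 0 T) := by fun_prop
  have hd : ∀ t ∈ Ioo 0 T, HasDerivAt (fun t => -((T - t) * z t)) (z t - (T - t) * z' t) t := by
    intro t ht
    have hzt := (hz t (Ioo_subset_Icc_self ht)).hasDerivAt (Icc_mem_nhds ht.1 ht.2)
    refine ((((hasDerivAt_id t).const_sub T).mul hzt).neg).congr_deriv ?_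
    simp only [id_eq]
    ring
  rw [← integral_Ioc_eq_integral_Ioo, ← intervalIntegral.integral_of_le hT,
    intervalIntegral.integral_eq_sub_of_hasDerivAt_of_le hT (by fun_prop) hd
      (hc.intervalIntegrable_of_Icc hT)]
  ring

lemma le_mul_add_indicator_of_mem_Ioo {a : ℝ → ℝ} {T t : ℝ} (ha : 0 ≤ a t) (ht : t ∈ Ioo 0 T) :
    a t ≤ (T - t) * (4 / T) * a t + (Ioo (3 * T / 4) T).indicator a t := by
  have hT : 0 < T := ht.1.trans ht.2
  rcases le_or_gt t (3 * T / 4) with hearly | hlate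
  · rw [indicator_of_notMem fun hmem => hearly.not_gt hmem.1, add_zero]
    refine le_mul_of_one_le_left ha ?_
    rw [mul_div_assoc', le_div_iff₀ hT]
    linarith
  · rw [indicator_of_mem (show t ∈ Ioo _ T from ⟨hlate, ht.2⟩)]
    have := sub_nonneg.2 ht.2.le
    exact le_add_of_nonneg_left (by positivity)

section Energy

variable {E : Type*} [NormedAddCommGroup E] [NormedSpace ℝ E]

/-- A classical solution of `∂ₜv + ⟨H, ∇v⟩ + pv = g` on the cylinder over `D`, regular up to the
boundary of the cylinder. -/
structure IsTransportSolution (D : Set E) (T : ℝ) (H : E → E) (p : E → ℝ) (v g : E → ℝ → ℝ) :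
    Prop where
  contDiffOn : ContDiffOn ℝ 1 (fun q : E × ℝ => v q.1 q.2) (closure D ×ˢ Icc 0 T)
  continuousOn_coeff : ContinuousOn p (closure D)
  continuousOn_source : ContinuousOn (fun q : E × ℝ => g q.1 q.2) (closure D ×ˢ Icc 0 T)
  equation : ∀ x ∈ D, ∀ t ∈ Ioo 0 T,
    timeDeriv T v x t + fderiv ℝ (fun z => v z t) x (H x) + p x * v x t = g x t

/-- What the energy method needs to know about the field `H` on the domain `D`, with interior
measure `μ`: the flux of `H` out of `D` is at most `M` times the boundary measure `ν`, and the
divergence of `H` is at least `-N`. Both are encoded by the integrated divergence theorem. -/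
structure IsTransportDomain [MeasurableSpace E] (D : Set E) (H : E → E) (μ ν : Measure E)
    (M N : ℝ) : Prop where
  isOpen : IsOpen D
  isCompact_closure : IsCompact (closure D)
  ae_mem : ∀ᵐ x ∂μ, x ∈ D
  ae_boundary_mem_closure : ∀ᵐ x ∂ν, x ∈ closure D
  integral_fderiv_le : ∀ g : E → ℝ, ContinuousOn g (closure D) → (∀ x ∈ closure D, 0 ≤ g x) →
    ContDiffOn ℝ 1 g D → Integrable (fun x => fderiv ℝ g x (H x)) μ →
      ∫ x, fderiv ℝ g x (H x) ∂μ ≤ M * (∫ x, g x ∂ν) + N * ∫ x, g x ∂μ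

namespace IsTransportDomain

variable [MeasurableSpace E] {D : Set E} {H : E → E} {μ ν : Measure E} {M N : ℝ} {k : E → ℝ}

lemma ae_mem_closure (hD : IsTransportDomain D H μ ν M N) : ∀ᵐ x ∂μ, x ∈ closure D :=
  hD.ae_mem.mono fun _ hx => subset_closure hx

lemma integrable [OpensMeasurableSpace E] [IsFiniteMeasure μ]
    (hD : IsTransportDomain D H μ ν M N) (hk : ContinuousOn k (closure D)) : Integrable k μ :=
  integrable_of_continuousOn_isCompact hD.isCompact_closure hD.ae_mem_closure hk

end IsTransportDomain

namespace IsTransportSolution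

variable {D : Set E} {T t M N κ : ℝ} {H : E → E} {p : E → ℝ} {v g : E → ℝ → ℝ}
  (hv : IsTransportSolution D T H p v g)
include hv

lemma continuousOn_sq :
    ContinuousOn (fun q : E × ℝ => v q.1 q.2 ^ 2) (closure D ×ˢ Icc 0 T) :=
  hv.contDiffOn.continuousOn.pow 2

lemma continuousOn_timeDeriv (hT : 0 < T) :
    ContinuousOn (fun q : E × ℝ => timeDeriv T v q.1 q.2) (closure D ×ˢ Icc 0 T) :=
  (contDiffOn_timeDeriv (n := 0) hT (by simpa using hv.contDiffOn)).continuousOn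

lemma contDiffOn_slice (ht : t ∈ Icc 0 T) : ContDiffOn ℝ 1 (fun x => v x t) (closure D) :=
  hv.contDiffOn.comp (f := fun x => (x, t)) (by fun_prop) fun _ hx => ⟨hx, ht⟩

lemma fderiv_sq (hD : IsOpen D) {x : E} (hx : x ∈ D) (ht : t ∈ Ioo 0 T) :
    fderiv ℝ (fun z => v z t ^ 2) x (H x) =
      2 * v x t * (g x t - timeDeriv T v x t - p x * v x t) := by
  have hvx : DifferentiableAt ℝ (fun z => v z t) x :=
    (((hv.contDiffOn_slice (Ioo_subset_Icc_self ht)).mono subset_closure).contDiffAt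
      (hD.mem_nhds hx)).differentiableAt one_ne_zero
  rw [fderiv_fun_pow 2 hvx, ← hv.equation x hx t ht]
  simp only [Nat.add_one_sub_one, pow_one, nsmul_eq_mul, Nat.cast_ofNat, smul_apply, smul_eq_mul]
  ring

variable [MeasurableSpace E] [OpensMeasurableSpace E]
  {μ ν : Measure E} [IsFiniteMeasure μ] (hD : IsTransportDomain D H μ ν M N)
include hD

lemma neg_integral_mul_timeDeriv_le (hp : ∀ x ∈ D, p x ≤ -κ) (ht : t ∈ Ioo 0 T) :
    -∫ x, 2 * v x t * timeDeriv T v x t ∂μ ≤ M * (∫ x, v x t ^ 2 ∂ν) +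
      (N + 1 - 2 * κ) * (∫ x, v x t ^ 2 ∂μ) + ∫ x, g x t ^ 2 ∂μ := by
  have ht' := Ioo_subset_Icc_self ht
  have hvc := (hv.contDiffOn_slice ht').continuousOn
  have hv'c := continuousOn_space_slice (hv.continuousOn_timeDeriv (ht.1.trans ht.2)) ht'
  have hgc := continuousOn_space_slice hv.continuousOn_source ht'
  have hpc := hv.continuousOn_coeff
  have hfderiv : Integrable (fun x => fderiv ℝ (fun z => v z t ^ 2) x (H x)) μ :=
    (hD.integrable (by fun_prop : ContinuousOn
      (fun x => 2 * v x t * (g x t - timeDeriv T v x t - p x * v x t)) (closure D))).congr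
      (hD.ae_mem.mono fun x hx => (hv.fderiv_sq hD.isOpen hx ht).symm)
  have hv2 : Integrable (fun x => (1 - 2 * κ) * v x t ^ 2) μ := hD.integrable (by fun_prop)
  have hg2 : Integrable (fun x => g x t ^ 2) μ := hD.integrable (by fun_prop)
  have hsum : Integrable
      (fun x => fderiv ℝ (fun z => v z t ^ 2) x (H x) + (1 - 2 * κ) * v x t ^ 2) μ :=
    hfderiv.add hv2
  have hflux := hD.integral_fderiv_le (fun x => v x t ^ 2) (hvc.pow 2) (fun x _ => sq_nonneg _)
    (((hv.contDiffOn_slice ht').mono subset_closure).pow 2) hfderiv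
  have hmono : ∫ x, -(2 * v x t * timeDeriv T v x t) ∂μ ≤
      ∫ x, (fderiv ℝ (fun z => v z t ^ 2) x (H x) + (1 - 2 * κ) * v x t ^ 2 + g x t ^ 2) ∂μ := by
    refine integral_mono_ae (hD.integrable (by fun_prop)) (hsum.add hg2)
      (hD.ae_mem.mono fun x hx => ?_)
    dsimp only
    rw [hv.fderiv_sq hD.isOpen hx ht]
    linarith [sq_nonneg (v x t + g x t), mul_le_mul_of_nonneg_right (hp x hx) (sq_nonneg (v x t))]
  rw [integral_neg, integral_add hsum hg2, integral_add hfderiv hv2,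
    integral_const_mul] at hmono
  linarith

lemma mul_integral_sq_zero_eq (hT : 0 < T) : T * ∫ x, v x 0 ^ 2 ∂μ =
    ∫ t in Ioo 0 T, ∫ x, (v x t ^ 2 - (T - t) * (2 * v x t * timeDeriv T v x t)) ∂μ := by
  have hvc := hv.contDiffOn.continuousOn
  have hv'c := hv.continuousOn_timeDeriv hT
  have hzc : ContinuousOn (fun q : E × ℝ => v q.1 q.2 ^ 2 -
      (T - q.2) * (2 * v q.1 q.2 * timeDeriv T v q.1 q.2)) (closure D ×ˢ Icc 0 T) := by fun_prop
  rw [← integral_setIntegral_swap (F := fun x t => v x t ^ 2 -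
      (T - t) * (2 * v x t * timeDeriv T v x t)) hzc hD.isCompact_closure
    hD.ae_mem_closure, ← integral_const_mul]
  refine integral_congr_ae (hD.ae_mem.mono fun x hx => ?_)
  have hx' := subset_closure hx
  refine mul_eq_setIntegral_sub_mul_deriv hT.le (z := fun t => v x t ^ 2) (fun t ht => ?_)
    ((continuousOn_const.mul (continuousOn_time_slice hvc hx')).mul
      (continuousOn_time_slice hv'c hx'))
  exact ((hasDerivWithinAt_timeDeriv hv.contDiffOn hx' ht).pow 2).congr_deriv (by norm_num)

lemma integral_sq_sub_mul_timeDeriv_le (hM : 0 ≤ M) (hp : ∀ x ∈ D, p x ≤ -κ)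
    (hκ : 4 / T + N + 2 ≤ 2 * κ) (ht : t ∈ Ioo 0 T) :
    ∫ x, (v x t ^ 2 - (T - t) * (2 * v x t * timeDeriv T v x t)) ∂μ ≤
      (Ioo (3 * T / 4) T).indicator (fun t => ∫ x, v x t ^ 2 ∂μ) t +
        T * M * (∫ x, v x t ^ 2 ∂ν) + T * (∫ x, g x t ^ 2 ∂μ) -
          (T - t) * ∫ x, v x t ^ 2 ∂μ := by
  have ht' := Ioo_subset_Icc_self ht
  have hT : 0 < T := ht.1.trans ht.2
  have hvc := (hv.contDiffOn_slice ht').continuousOn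
  have hv'c := continuousOn_space_slice (hv.continuousOn_timeDeriv hT) ht'
  rw [integral_sub (hD.integrable (by fun_prop)) (hD.integrable (by fun_prop)), integral_const_mul]
  have hslice := hv.neg_integral_mul_timeDeriv_le hD hp ht
  have hvμ : 0 ≤ ∫ x, v x t ^ 2 ∂μ := integral_nonneg fun x => sq_nonneg _
  have hvν : 0 ≤ ∫ x, v x t ^ 2 ∂ν := integral_nonneg fun x => sq_nonneg _
  have hgμ : 0 ≤ ∫ x, g x t ^ 2 ∂μ := integral_nonneg fun x => sq_nonneg _
  have hlate := le_mul_add_indicator_of_mem_Ioo (a := fun t => ∫ x, v x t ^ 2 ∂μ) hvμ ht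
  have hχ : 0 ≤ T - t := sub_nonneg.2 ht.2.le
  have hχT : T - t ≤ T := sub_le_self T ht.1.le
  have hscaled := mul_le_mul_of_nonneg_left hslice hχ
  have hbdry := mul_le_mul_of_nonneg_right hχT (mul_nonneg hM hvν)
  have hsource := mul_le_mul_of_nonneg_right hχT hgμ
  have habsorb : (T - t) * (∫ x, v x t ^ 2 ∂μ) * (N + 1 - 2 * κ) ≤
      (T - t) * (∫ x, v x t ^ 2 ∂μ) * (-(4 / T) - 1) :=
    mul_le_mul_of_nonneg_left (by linarith) (mul_nonneg hχ hvμ)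
  linarith

theorem energy_estimate [IsFiniteMeasure ν] (hT : 0 < T) (hM : 0 ≤ M)
    (hp : ∀ x ∈ D, p x ≤ -κ) (hκ : 4 / T + N + 2 ≤ 2 * κ) :
    T * (∫ x, v x 0 ^ 2 ∂μ) + ∫ t in Ioo 0 T, (T - t) * ∫ x, v x t ^ 2 ∂μ ≤
      (∫ t in Ioo (3 * T / 4) T, ∫ x, v x t ^ 2 ∂μ) +
        T * M * (∫ t in Ioo 0 T, ∫ x, v x t ^ 2 ∂ν) +
          T * ∫ t in Ioo 0 T, ∫ x, g x t ^ 2 ∂μ := by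
  have hvc := hv.contDiffOn.continuousOn
  have hv'c := hv.continuousOn_timeDeriv hT
  have hzc : ContinuousOn (fun q : E × ℝ => v q.1 q.2 ^ 2 -
      (T - q.2) * (2 * v q.1 q.2 * timeDeriv T v q.1 q.2)) (closure D ×ˢ Icc 0 T) := by fun_prop
  have hvμ : IntegrableOn (fun t => ∫ x, v x t ^ 2 ∂μ) (Ioo 0 T) :=
    integrableOn_integral_space hv.continuousOn_sq hD.isCompact_closure hD.ae_mem_closure
  have hvν : IntegrableOn (fun t => ∫ x, v x t ^ 2 ∂ν) (Ioo 0 T) :=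
    integrableOn_integral_space hv.continuousOn_sq hD.isCompact_closure hD.ae_boundary_mem_closure
  have hgμ : IntegrableOn (fun t => ∫ x, g x t ^ 2 ∂μ) (Ioo 0 T) :=
    integrableOn_integral_space (hv.continuousOn_source.pow 2) hD.isCompact_closure
      hD.ae_mem_closure
  have hlate := IntegrableOn.indicator hvμ (measurableSet_Ioo (a := 3 * T / 4) (b := T))
  have hχv : IntegrableOn (fun t => (T - t) * ∫ x, v x t ^ 2 ∂μ) (Ioo 0 T) :=
    hvμ.continuousOn_mul_of_subset (K := Icc 0 T) (by fun_prop) isCompact_Icc measurableSet_Ioo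
      Ioo_subset_Icc_self
  have hmono := setIntegral_mono_on
    (integrableOn_integral_space (F := fun x t => v x t ^ 2 -
      (T - t) * (2 * v x t * timeDeriv T v x t)) hzc hD.isCompact_closure hD.ae_mem_closure)
    (((hlate.add (hvν.const_mul (T * M))).add (hgμ.const_mul T)).sub hχv) measurableSet_Ioo
    fun t ht => hv.integral_sq_sub_mul_timeDeriv_le hD hM hp hκ ht
  rw [← hv.mul_integral_sq_zero_eq hD hT,
    integral_sub' ((hlate.add (hvν.const_mul _)).add (hgμ.const_mul _)) hχv,
    integral_add' (hlate.add (hvν.const_mul _)) (hgμ.const_mul _),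
    integral_add' hlate (hvν.const_mul _), integral_const_mul, integral_const_mul,
    setIntegral_indicator measurableSet_Ioo,
    inter_eq_self_of_subset_right (Ioo_subset_Ioo_left (by positivity))] at hmono
  linarith

end IsTransportSolution

end Energy

lemma setIntegral_exp_neg_mul_le {l T : ℝ} (hl : 0 < l) (hT : 0 ≤ T) :
    ∫ t in Ioo 0 T, Real.exp (-(l * t)) ≤ 1 / l := by
  rw [← integral_Ioc_eq_integral_Ioo, ← intervalIntegral.integral_of_le hT]
  simp only [← neg_mul]
  rw [intervalIntegral.integral_comp_mul_left Real.exp (neg_ne_zero.2 hl.ne'), integral_exp,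
    mul_zero, Real.exp_zero, smul_eq_mul, inv_neg, neg_mul, ← mul_neg, neg_sub, one_div]
  exact mul_le_of_le_one_right (inv_pos.2 hl).le (sub_le_self _ (Real.exp_pos _).le)

section Carleman

/-- The conjugate `u(x,t) exp(s(ψ(x) - βt))` of `u` by the Carleman weight `ψ(x) - βt` with large
parameter `s`. -/
def carlemanConj {α : Type*} (s β : ℝ) (ψ : α → ℝ) (u : α → ℝ → ℝ) (x : α) (t : ℝ) : ℝ :=
  u x t * Real.exp (s * (ψ x - β * t))

lemma sq_carlemanConj {α : Type*} (s β : ℝ) (ψ : α → ℝ) (u : α → ℝ → ℝ) (x : α) (t : ℝ) :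
    carlemanConj s β ψ u x t ^ 2 = u x t ^ 2 * Real.exp (2 * s * (ψ x - β * t)) := by
  rw [carlemanConj, mul_pow, ← Real.exp_nat_mul]
  congr 2
  push_cast
  ring

lemma continuousOn_carlemanConj {X : Type*} [TopologicalSpace X] {D : Set X} {T s β : ℝ} {ψ : X → ℝ}
    {u : X → ℝ → ℝ} (hψ : ContinuousOn ψ D)
    (hu : ContinuousOn (fun q : X × ℝ => u q.1 q.2) (D ×ˢ Icc 0 T)) :
    ContinuousOn (fun q : X × ℝ => carlemanConj s β ψ u q.1 q.2) (D ×ˢ Icc 0 T) := by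
  have hψ' : ContinuousOn (fun q : X × ℝ => ψ q.1) (D ×ˢ Icc 0 T) :=
    hψ.comp continuousOn_fst fun q hq => hq.1
  exact hu.mul (Real.continuous_exp.comp_continuousOn
    (continuousOn_const.mul (hψ'.sub (by fun_prop))))

variable {E : Type*} [NormedAddCommGroup E] [NormedSpace ℝ E]

/-- A spatial weight `ψ` which grows along the field `H` at least twice as fast as the Carleman
weight `ψ(x) - βt` decreases in time. -/
structure IsCarlemanWeight (D : Set E) (H : E → E) (ψ : E → ℝ) (β : ℝ) : Prop where
  speed_pos : 0 < β
  contDiffOn : ContDiffOn ℝ 1 ψ (closure D)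
  continuousOn_fderiv : ContinuousOn (fun x => fderiv ℝ ψ x (H x)) (closure D)
  le_fderiv : ∀ x ∈ D, 2 * β ≤ fderiv ℝ ψ x (H x)

variable {D : Set E} {T P s β C₂ : ℝ} {H : E → E} {p ψ : E → ℝ} {u r : E → ℝ → ℝ}

lemma contDiffOn_carlemanConj (hψ : ContDiffOn ℝ 1 ψ D)
    (hu : ContDiffOn ℝ 1 (fun q : E × ℝ => u q.1 q.2) (D ×ˢ Icc 0 T)) :
    ContDiffOn ℝ 1 (fun q : E × ℝ => carlemanConj s β ψ u q.1 q.2) (D ×ˢ Icc 0 T) := by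
  have hψ' : ContDiffOn ℝ 1 (fun q : E × ℝ => ψ q.1) (D ×ˢ Icc 0 T) :=
    hψ.comp contDiffOn_fst fun q hq => hq.1
  exact hu.mul (contDiffOn_const.mul (hψ'.sub (by fun_prop))).exp

lemma IsTransportSolution.conjugate (hu : IsTransportSolution D T H p u r) (hD : IsOpen D)
    (hψ : IsCarlemanWeight D H ψ β) :
    IsTransportSolution D T H (fun x => p x - s * (fderiv ℝ ψ x (H x) - β))
      (carlemanConj s β ψ u) (carlemanConj s β ψ r) where
  contDiffOn := contDiffOn_carlemanConj hψ.contDiffOn hu.contDiffOn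
  continuousOn_coeff := hu.continuousOn_coeff.sub
    (continuousOn_const.mul (hψ.continuousOn_fderiv.sub continuousOn_const))
  continuousOn_source := continuousOn_carlemanConj hψ.contDiffOn.continuousOn hu.continuousOn_source
  equation x hx t ht := by
    have hx' := subset_closure hx
    have ht' := Ioo_subset_Icc_self ht
    have hux : DifferentiableAt ℝ (fun z => u z t) x :=
      (((hu.contDiffOn_slice ht').mono subset_closure).contDiffAt
        (hD.mem_nhds hx)).differentiableAt one_ne_zero
    have hψx : DifferentiableAt ℝ ψ x :=
      ((hψ.contDiffOn.mono subset_closure).contDiffAt (hD.mem_nhds hx)).differentiableAt one_ne_zero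
    have htime : timeDeriv T (carlemanConj s β ψ u) x t =
        (timeDeriv T u x t - s * β * u x t) * Real.exp (s * (ψ x - β * t)) := by
      rw [timeDeriv_eq_deriv ht]
      refine (((hasDerivAt_timeDeriv hu.contDiffOn hx' ht).mul
        ((((hasDerivAt_id t).const_mul β).const_sub (ψ x)).const_mul s).exp).congr_deriv ?_).deriv
      simp only [id_eq]
      ring
    have hspace : fderiv ℝ (fun z => carlemanConj s β ψ u z t) x (H x) =
        (fderiv ℝ (fun z => u z t) x (H x) + s * fderiv ℝ ψ x (H x) * u x t) *
          Real.exp (s * (ψ x - β * t)) := by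
      have hderiv := hux.hasFDerivAt.mul ((hψx.hasFDerivAt.sub_const (β * t)).const_mul s).exp
      have hfun : (fun z => carlemanConj s β ψ u z t) =
        (fun z => u z t) * fun z => Real.exp (s * (ψ z - β * t)) := rfl
      rw [hfun, hderiv.fderiv]
      simp only [add_apply, smul_apply, smul_eq_mul]
      ring
    rw [htime, hspace, carlemanConj, carlemanConj, ← hu.equation x hx t ht]
    ring

variable [MeasurableSpace E] [OpensMeasurableSpace E]
  {μ ν : Measure E} [IsFiniteMeasure μ] {M N : ℝ}

lemma IsTransportSolution.setIntegral_sq_carlemanConj_source_le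
    (hu : IsTransportSolution D T H p u r) (hT : 0 ≤ T) (hD : IsTransportDomain D H μ ν M N)
    (hψ : IsCarlemanWeight D H ψ β) (hs : 0 < s) (hr : ∀ x ∈ D, ∀ t ∈ Ioo 0 T,
      r x t ^ 2 ≤ C₂ * u x 0 ^ 2) (hC₂ : 0 ≤ C₂) (hsC₂ : C₂ ≤ s * β) :
    ∫ t in Ioo 0 T, ∫ x, carlemanConj s β ψ r x t ^ 2 ∂μ ≤
      1 / 2 * ∫ x, carlemanConj s β ψ u x 0 ^ 2 ∂μ := by
  have hψc := hψ.contDiffOn.continuousOn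
  have hrc := (continuousOn_carlemanConj (s := s) (β := β) hψc hu.continuousOn_source).pow 2
  have huc := (continuousOn_carlemanConj (s := s) (β := β) hψc hu.contDiffOn.continuousOn).pow 2
  have hl : 0 < 2 * s * β := by have := hψ.speed_pos; positivity
  set W := ∫ x, carlemanConj s β ψ u x 0 ^ 2 ∂μ
  have hW : 0 ≤ W := integral_nonneg fun x => sq_nonneg _
  have hslice : ∀ t ∈ Ioo 0 T, ∫ x, carlemanConj s β ψ r x t ^ 2 ∂μ ≤
      C₂ * W * Real.exp (-(2 * s * β * t)) := by
    intro t ht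
    rw [mul_right_comm, ← integral_const_mul]
    refine integral_mono_ae
      (integrable_space_slice (F := fun x t => carlemanConj s β ψ r x t ^ 2) hrc
        hD.isCompact_closure hD.ae_mem_closure (Ioo_subset_Icc_self ht))
      ((integrable_space_slice (F := fun x t => carlemanConj s β ψ u x t ^ 2) huc
        hD.isCompact_closure hD.ae_mem_closure (left_mem_Icc.2 hT)).const_mul _)
      (hD.ae_mem.mono fun x hx => ?_)
    dsimp only
    rw [sq_carlemanConj, sq_carlemanConj, mul_zero, sub_zero, mul_sub (2 * s), sub_eq_add_neg,
      Real.exp_add, ← mul_assoc (2 * s)]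
    exact (mul_le_mul_of_nonneg_right (hr x hx t ht) (by positivity)).trans_eq (by ring)
  have hexp : IntegrableOn (fun t => C₂ * W * Real.exp (-(2 * s * β * t))) (Ioo 0 T) :=
    (Continuous.integrableOn_Icc (by fun_prop)).mono_set Ioo_subset_Icc_self
  calc ∫ t in Ioo 0 T, ∫ x, carlemanConj s β ψ r x t ^ 2 ∂μ
      ≤ ∫ t in Ioo 0 T, C₂ * W * Real.exp (-(2 * s * β * t)) :=
        setIntegral_mono_on
          (integrableOn_integral_space (F := fun x t => carlemanConj s β ψ r x t ^ 2) hrc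
            hD.isCompact_closure hD.ae_mem_closure) hexp measurableSet_Ioo hslice
    _ ≤ C₂ * W * (1 / (2 * s * β)) := by
        rw [integral_const_mul]
        exact mul_le_mul_of_nonneg_left (setIntegral_exp_neg_mul_le hl hT) (by positivity)
    _ ≤ 1 / 2 * W := by
        rw [mul_one_div, div_le_iff₀ hl]
        exact (mul_le_mul_of_nonneg_right hsC₂ hW).trans_eq (by ring)

/- The conjugated equation has the potential `p - s(⟨H, ∇ψ⟩ - β) ≤ P - sβ`, as negative as the
energy estimate requires when `s` is large. -/
theorem IsTransportSolution.carleman_estimate [IsFiniteMeasure ν]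
    (hu : IsTransportSolution D T H p u r) (hT : 0 < T) (hD : IsTransportDomain D H μ ν M N)
    (hM : 0 ≤ M) (hψ : IsCarlemanWeight D H ψ β) (hp : ∀ x ∈ D, p x ≤ P)
    (hr : ∀ x ∈ D, ∀ t ∈ Ioo 0 T, r x t ^ 2 ≤ C₂ * u x 0 ^ 2) (hC₂ : 0 ≤ C₂) (hs : 0 < s)
    (hsC₂ : C₂ ≤ s * β) (hsP : 4 / T + N + 2 ≤ 2 * (s * β - P)) :
    T / 2 * (∫ x, carlemanConj s β ψ u x 0 ^ 2 ∂μ) +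
      ∫ t in Ioo 0 T, (T - t) * ∫ x, carlemanConj s β ψ u x t ^ 2 ∂μ ≤
        (∫ t in Ioo (3 * T / 4) T, ∫ x, carlemanConj s β ψ u x t ^ 2 ∂μ) +
          T * M * ∫ t in Ioo 0 T, ∫ x, carlemanConj s β ψ u x t ^ 2 ∂ν := by
  have hpotential : ∀ x ∈ D, p x - s * (fderiv ℝ ψ x (H x) - β) ≤ -(s * β - P) := fun x hx => by
    have := mul_le_mul_of_nonneg_left (hψ.le_fderiv x hx) hs.le
    linarith [hp x hx]
  have henergy := (hu.conjugate (s := s) hD.isOpen hψ).energy_estimate hD hT hM hpotential hsP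
  have hsource := mul_le_mul_of_nonneg_left
    (hu.setIntegral_sq_carlemanConj_source_le hT.le hD hψ hs hr hC₂ hsC₂) hT.le
  linarith

end Carleman

section WeightRemoval

lemma sq_carlemanConj_le {α : Type*} {s β a t : ℝ} {ψ : α → ℝ} {x : α} (u : α → ℝ → ℝ)
    (hs : 0 ≤ s) (ha : ψ x - β * t ≤ a) :
    carlemanConj s β ψ u x t ^ 2 ≤ Real.exp (2 * s * a) * u x t ^ 2 := by
  rw [sq_carlemanConj, mul_comm]
  gcongr

lemma le_sq_carlemanConj {α : Type*} {s β a t : ℝ} {ψ : α → ℝ} {x : α} (u : α → ℝ → ℝ)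
    (hs : 0 ≤ s) (ha : a ≤ ψ x - β * t) :
    Real.exp (2 * s * a) * u x t ^ 2 ≤ carlemanConj s β ψ u x t ^ 2 := by
  rw [sq_carlemanConj, mul_comm]
  gcongr

variable {X : Type*} [TopologicalSpace X] [T2Space X]
  [MeasurableSpace X] [OpensMeasurableSpace X] {μ ν : Measure X} [IsFiniteMeasure μ]
  {K : Set X} (hK : IsCompact K) (hμ : ∀ᵐ x ∂μ, x ∈ K) {T M s β a : ℝ}

section Comparison

variable {F G : X → ℝ → ℝ} (hF : ContinuousOn (fun q : X × ℝ => F q.1 q.2) (K ×ˢ Icc 0 T))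
  (hG : ContinuousOn (fun q : X × ℝ => G q.1 q.2) (K ×ˢ Icc 0 T))
include hK hμ hF hG

lemma integral_space_slice_mono {t : ℝ} (ht : t ∈ Icc 0 T) (hFG : ∀ x ∈ K, F x t ≤ G x t) :
    ∫ x, F x t ∂μ ≤ ∫ x, G x t ∂μ :=
  integral_mono_ae (integrable_space_slice hF hK hμ ht) (integrable_space_slice hG hK hμ ht)
    (hμ.mono hFG)

lemma setIntegral_integral_mono {J : Set ℝ} (hJ : MeasurableSet J) (hJT : J ⊆ Ioo 0 T)
    (hFG : ∀ x ∈ K, ∀ t ∈ J, F x t ≤ G x t) :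
    ∫ t in J, ∫ x, F x t ∂μ ≤ ∫ t in J, ∫ x, G x t ∂μ :=
  setIntegral_mono_on ((integrableOn_integral_space hF hK hμ).mono_set hJT)
    ((integrableOn_integral_space hG hK hμ).mono_set hJT) hJ fun t ht =>
      integral_space_slice_mono hK hμ hF hG (Ioo_subset_Icc_self (hJT ht))
        fun x hx => hFG x hx t ht

end Comparison

variable {ψ : X → ℝ} {u : X → ℝ → ℝ} (hψ : ContinuousOn ψ K)
  (hu : ContinuousOn (fun q : X × ℝ => u q.1 q.2) (K ×ˢ Icc 0 T)) (hs : 0 ≤ s)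
include hK hμ hψ hu hs

lemma setIntegral_sq_carlemanConj_le {J : Set ℝ} (hJ : MeasurableSet J) (hJT : J ⊆ Ioo 0 T)
    (ha : ∀ x ∈ K, ∀ t ∈ J, ψ x - β * t ≤ a) :
    ∫ t in J, ∫ x, carlemanConj s β ψ u x t ^ 2 ∂μ ≤
      Real.exp (2 * s * a) * ∫ t in J, ∫ x, u x t ^ 2 ∂μ := by
  simp only [← integral_const_mul]
  exact setIntegral_integral_mono hK hμ (F := fun x t => carlemanConj s β ψ u x t ^ 2)
    (G := fun x t => Real.exp (2 * s * a) * u x t ^ 2)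
    ((continuousOn_carlemanConj hψ hu).pow 2) (continuousOn_const.mul (hu.pow 2)) hJ hJT
    fun x hx t ht => sq_carlemanConj_le u hs (ha x hx t ht)

lemma le_integral_sq_carlemanConj {t : ℝ} (ht : t ∈ Icc 0 T) (ha : ∀ x ∈ K, a ≤ ψ x - β * t) :
    Real.exp (2 * s * a) * ∫ x, u x t ^ 2 ∂μ ≤ ∫ x, carlemanConj s β ψ u x t ^ 2 ∂μ := by
  rw [← integral_const_mul]
  exact integral_space_slice_mono hK hμ (F := fun x t => Real.exp (2 * s * a) * u x t ^ 2)
    (G := fun x t => carlemanConj s β ψ u x t ^ 2) (continuousOn_const.mul (hu.pow 2))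
    ((continuousOn_carlemanConj hψ hu).pow 2) ht fun x hx => le_sq_carlemanConj u hs (ha x hx)

lemma le_setIntegral_sub_mul_sq_carlemanConj {ε : ℝ} (hεT : ε ≤ T)
    (ha : ∀ x ∈ K, ∀ t ∈ Ioo 0 ε, a ≤ ψ x - β * t) :
    (T - ε) * (Real.exp (2 * s * a) * ∫ t in Ioo 0 ε, ∫ x, u x t ^ 2 ∂μ) ≤
      ∫ t in Ioo 0 T, (T - t) * ∫ x, carlemanConj s β ψ u x t ^ 2 ∂μ := by
  have hJT : Ioo 0 ε ⊆ Ioo 0 T := Ioo_subset_Ioo_right hεT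
  have hvc : ContinuousOn (fun q : X × ℝ => carlemanConj s β ψ u q.1 q.2 ^ 2) (K ×ˢ Icc 0 T) :=
    (continuousOn_carlemanConj hψ hu).pow 2
  have hχv : ContinuousOn (fun q : X × ℝ => (T - q.2) * carlemanConj s β ψ u q.1 q.2 ^ 2)
      (K ×ˢ Icc 0 T) := by fun_prop
  simp only [← integral_const_mul]
  calc ∫ t in Ioo 0 ε, ∫ x, (T - ε) * (Real.exp (2 * s * a) * u x t ^ 2) ∂μ
      ≤ ∫ t in Ioo 0 ε, ∫ x, (T - t) * carlemanConj s β ψ u x t ^ 2 ∂μ :=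
        setIntegral_integral_mono hK hμ
          (F := fun x t => (T - ε) * (Real.exp (2 * s * a) * u x t ^ 2))
          (G := fun x t => (T - t) * carlemanConj s β ψ u x t ^ 2)
          (continuousOn_const.mul (continuousOn_const.mul (hu.pow 2))) hχv measurableSet_Ioo hJT
          fun x hx t ht => mul_le_mul (sub_le_sub_left ht.2.le T)
            (le_sq_carlemanConj u hs (ha x hx t ht)) (by positivity)
            (sub_nonneg.2 (ht.2.le.trans hεT))
    _ ≤ ∫ t in Ioo 0 T, ∫ x, (T - t) * carlemanConj s β ψ u x t ^ 2 ∂μ := by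
        refine setIntegral_mono_set (integrableOn_integral_space
          (F := fun x t => (T - t) * carlemanConj s β ψ u x t ^ 2) hχv hK hμ) ?_ hJT.eventuallyLE
        filter_upwards [ae_restrict_mem measurableSet_Ioo] with t ht
        exact integral_nonneg fun x => mul_nonneg (sub_nonneg.2 ht.2.le) (sq_nonneg _)

/- As `|ψ| ≤ βT/4`, the exponent `ψ(x) - βt` is at least `-5βT/16` for `t ≤ T/16`, at most `-βT/2`
for `t ≥ 3T/4` and at most `βT/4` throughout. -/
theorem energy_le_of_carleman_estimate [IsFiniteMeasure ν] (hν : ∀ᵐ x ∂ν, x ∈ K) (hT : 0 < T)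
    (hM : 0 ≤ M) (hβ : 0 ≤ β) (hψT : ∀ x ∈ K, |ψ x| ≤ β * T / 4)
    (hcarleman : T / 2 * (∫ x, carlemanConj s β ψ u x 0 ^ 2 ∂μ) +
      ∫ t in Ioo 0 T, (T - t) * ∫ x, carlemanConj s β ψ u x t ^ 2 ∂μ ≤
        (∫ t in Ioo (3 * T / 4) T, ∫ x, carlemanConj s β ψ u x t ^ 2 ∂μ) +
          T * M * ∫ t in Ioo 0 T, ∫ x, carlemanConj s β ψ u x t ^ 2 ∂ν) :
    T / 2 * Real.exp (2 * s * -(5 * (β * T) / 16)) *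
        ((∫ x, u x 0 ^ 2 ∂μ) + ∫ t in Ioo 0 (T / 16), ∫ x, u x t ^ 2 ∂μ) ≤
      Real.exp (2 * s * -(β * T / 2)) * (∫ t in Ioo (3 * T / 4) T, ∫ x, u x t ^ 2 ∂μ) +
        T * M * (Real.exp (2 * s * (β * T / 4)) * ∫ t in Ioo 0 T, ∫ x, u x t ^ 2 ∂ν) := by
  have hβT : 0 ≤ β * T := by positivity
  have hlower : ∀ x ∈ K, -(β * T / 4) ≤ ψ x := fun x hx => (abs_le.1 (hψT x hx)).1
  have hupper : ∀ x ∈ K, ψ x ≤ β * T / 4 := fun x hx => (abs_le.1 (hψT x hx)).2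
  have hinitial := le_integral_sq_carlemanConj (β := β) (a := -(5 * (β * T) / 16)) hK hμ hψ hu hs
    (left_mem_Icc.2 hT.le) fun x hx => by linarith [hlower x hx]
  have hearly := le_setIntegral_sub_mul_sq_carlemanConj (β := β) (a := -(5 * (β * T) / 16))
    (ε := T / 16) hK hμ hψ hu hs (by linarith) fun x hx t ht => by
      linarith [hlower x hx, mul_le_mul_of_nonneg_left ht.2.le hβ]
  have hlate := setIntegral_sq_carlemanConj_le (β := β) (a := -(β * T / 2)) hK hμ hψ hu hs
    (J := Ioo (3 * T / 4) T) measurableSet_Ioo (Ioo_subset_Ioo_left (by positivity))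
    fun x hx t ht => by linarith [hupper x hx, mul_le_mul_of_nonneg_left ht.1.le hβ]
  have htrace := setIntegral_sq_carlemanConj_le (β := β) (a := β * T / 4) hK hν hψ hu hs
    (J := Ioo 0 T) measurableSet_Ioo le_rfl
    fun x hx t ht => by linarith [hupper x hx, mul_nonneg hβ ht.1.le]
  have hearly_nonneg : 0 ≤ Real.exp (2 * s * -(5 * (β * T) / 16)) *
      ∫ t in Ioo 0 (T / 16), ∫ x, u x t ^ 2 ∂μ :=
    mul_nonneg (Real.exp_pos _).le
      (integral_nonneg fun t => integral_nonneg fun x => sq_nonneg _)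
  have hhalf : T / 2 ≤ T - T / 16 := by linarith
  linarith [mul_le_mul_of_nonneg_left hinitial (half_pos hT).le,
    mul_le_mul_of_nonneg_right hhalf hearly_nonneg,
    mul_le_mul_of_nonneg_left htrace (mul_nonneg hT.le hM)]

end WeightRemoval

section HolderOptimization

lemma sqrt_le_mul_exp_add_exp {P V W c s a α γ b : ℝ} (hc : 0 < c) (hV : 0 ≤ V) (hW : 0 ≤ W)
    (hb : 0 ≤ b)
    (h : c * Real.exp (2 * s * a) * P ≤ Real.exp (2 * s * (a - α)) * V +
      W * (Real.exp (2 * s * (a + γ)) * b ^ 2)) :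
    √P ≤ √((V + W) / c) * (Real.exp (-(α * s)) + Real.exp (γ * s) * b) := by
  have hsplit (τ : ℝ) :
      Real.exp (2 * s * (a + τ)) = Real.exp (2 * s * a) * Real.exp (τ * s) ^ 2 := by
    rw [← Real.exp_nat_mul, ← Real.exp_add]
    congr 1
    push_cast
    ring
  rw [sub_eq_add_neg, hsplit, hsplit, neg_mul] at h
  set A := Real.exp (-(α * s))
  set B := Real.exp (γ * s) * b with hB
  have hA : 0 ≤ A := (Real.exp_pos _).le
  have hB0 : 0 ≤ B := mul_nonneg (Real.exp_pos _).le hb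
  have hsq : c * P ≤ (V + W) * (A + B) ^ 2 := calc
    c * P ≤ V * A ^ 2 + W * B ^ 2 :=
      le_of_mul_le_mul_left (by rw [hB, mul_pow]; linarith) (Real.exp_pos (2 * s * a))
    _ ≤ V * (A + B) ^ 2 + W * (A + B) ^ 2 := by gcongr <;> linarith
    _ = (V + W) * (A + B) ^ 2 := by ring
  calc √P ≤ √((V + W) / c * (A + B) ^ 2) := by
        refine Real.sqrt_le_sqrt ?_
        rw [div_mul_eq_mul_div, le_div_iff₀ hc]
        linarith
    _ = √((V + W) / c) * (A + B) := by
        rw [Real.sqrt_mul (by positivity), Real.sqrt_sq (by positivity)]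

/- The optimal parameter is `s = s₀ - log b / (α + γ)`, which balances the two exponentials. -/
lemma le_rpow_add_of_forall_exp_of_lt_one {α γ b s₀ X C : ℝ} (hα : 0 < α) (hγ : 0 < γ) (hC : 0 ≤ C)
    (hb : 0 < b) (hb1 : b < 1) (hs₀ : 0 ≤ s₀)
    (hX : ∀ s, s₀ ≤ s → X ≤ C * (Real.exp (-(α * s)) + Real.exp (γ * s) * b)) :
    X ≤ C * (2 * Real.exp (γ * s₀)) * b ^ (α / (α + γ)) := by
  have hαγ : α + γ ≠ 0 := by positivity
  set s := s₀ - Real.log b / (α + γ) with hs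
  have hs₀s : s₀ ≤ s := by
    have := div_nonpos_of_nonpos_of_nonneg (Real.log_neg hb hb1).le (add_pos hα hγ).le
    linarith
  have hdecay : Real.exp (-(α * s)) = Real.exp (-(α * s₀)) * b ^ (α / (α + γ)) := by
    rw [Real.rpow_def_of_pos hb, ← Real.exp_add, hs]
    congr 1
    ring
  have hgrowth : Real.exp (γ * s) * b = Real.exp (γ * s₀) * b ^ (α / (α + γ)) := by
    nth_rw 1 [← Real.exp_log hb]
    rw [Real.rpow_def_of_pos hb, ← Real.exp_add, ← Real.exp_add, hs]
    congr 1
    field_simp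
    ring
  have hE : Real.exp (-(α * s₀)) ≤ Real.exp (γ * s₀) :=
    Real.exp_le_exp.2 (by linarith [mul_nonneg hα.le hs₀, mul_nonneg hγ.le hs₀])
  calc X ≤ C * (Real.exp (-(α * s)) + Real.exp (γ * s) * b) := hX s hs₀s
    _ = C * ((Real.exp (-(α * s₀)) + Real.exp (γ * s₀)) * b ^ (α / (α + γ))) := by
        rw [hdecay, hgrowth, add_mul]
    _ ≤ C * ((Real.exp (γ * s₀) + Real.exp (γ * s₀)) * b ^ (α / (α + γ))) := by gcongr
    _ = C * (2 * Real.exp (γ * s₀)) * b ^ (α / (α + γ)) := by ring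

lemma nonpos_of_forall_exp {α s₀ X C : ℝ} (hα : 0 < α)
    (hX : ∀ s, s₀ ≤ s → X ≤ C * Real.exp (-(α * s))) : X ≤ 0 := by
  have hlim : Filter.Tendsto (fun s : ℝ => C * Real.exp (-(α * s))) Filter.atTop (nhds (C * 0)) :=
    (Real.tendsto_exp_neg_atTop_nhds_zero.comp
      (Filter.tendsto_id.const_mul_atTop hα)).const_mul C
  rw [mul_zero] at hlim
  exact ge_of_tendsto hlim ((Filter.eventually_ge_atTop s₀).mono hX)

theorem le_rpow_add_self_of_forall_exp {α γ b s₀ X C : ℝ} (hα : 0 < α) (hγ : 0 < γ) (hC : 0 ≤ C)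
    (hb : 0 ≤ b) (hs₀ : 0 ≤ s₀)
    (hX : ∀ s, s₀ ≤ s → X ≤ C * (Real.exp (-(α * s)) + Real.exp (γ * s) * b)) :
    X ≤ C * (2 * Real.exp (γ * s₀)) * (b ^ (α / (α + γ)) + b) := by
  have hrpow : 0 ≤ b ^ (α / (α + γ)) := Real.rpow_nonneg hb _
  have hK : 0 ≤ C * (2 * Real.exp (γ * s₀)) := by positivity
  rcases le_or_gt 1 b with hb1 | hb1
  · have hdecay : Real.exp (-(α * s₀)) ≤ Real.exp (γ * s₀) * b :=
      (Real.exp_le_one_iff.2 (neg_nonpos.2 (by positivity))).trans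
        (one_le_mul_of_one_le_of_one_le (Real.one_le_exp (by positivity)) hb1)
    calc X ≤ C * (Real.exp (-(α * s₀)) + Real.exp (γ * s₀) * b) := hX s₀ le_rfl
      _ ≤ C * (Real.exp (γ * s₀) * b + Real.exp (γ * s₀) * b) := by gcongr
      _ = C * (2 * Real.exp (γ * s₀)) * b := by ring
      _ ≤ C * (2 * Real.exp (γ * s₀)) * (b ^ (α / (α + γ)) + b) := by gcongr; linarith
  rcases hb.eq_or_lt with rfl | hbpos
  · exact (nonpos_of_forall_exp hα fun s hs => by simpa using hX s hs).trans (by positivity)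
  · exact (le_rpow_add_of_forall_exp_of_lt_one hα hγ hC hbpos hb1 hs₀ hX).trans
      (mul_le_mul_of_nonneg_left (le_add_of_nonneg_right hb) hK)

end HolderOptimization

section InitiallyVanishing

lemma integral_sq_sub_mean {t : ℝ} {w : ℝ → ℝ} (ht : 0 < t) (hw : ContinuousOn w (Icc 0 t)) :
    ∫ τ in (0)..t, (w τ - (∫ σ in (0)..t, w σ) / t) ^ 2 =
      (∫ τ in (0)..t, w τ ^ 2) - (∫ τ in (0)..t, w τ) ^ 2 / t := by
  set m := ∫ τ in (0)..t, w τ with hm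
  have hint : IntervalIntegrable w volume 0 t := hw.intervalIntegrable_of_Icc ht.le
  have hint_sq : IntervalIntegrable (fun τ => w τ ^ 2) volume 0 t :=
    (hw.pow 2).intervalIntegrable_of_Icc ht.le
  have hexpand : ∀ τ, (w τ - m / t) ^ 2 = w τ ^ 2 - 2 * (m / t) * w τ + (m / t) ^ 2 :=
    fun τ => by ring
  simp only [hexpand]
  rw [intervalIntegral.integral_add (hint_sq.sub (hint.const_mul _)) (by simp),
    intervalIntegral.integral_sub hint_sq (hint.const_mul _),
    intervalIntegral.integral_const_mul, intervalIntegral.integral_const, ← hm]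
  simp only [sub_zero, smul_eq_mul]
  field_simp
  ring

lemma sq_integral_le {t : ℝ} {w : ℝ → ℝ} (ht : 0 < t) (hw : ContinuousOn w (Icc 0 t)) :
    (∫ τ in (0)..t, w τ) ^ 2 ≤ t * ∫ τ in (0)..t, w τ ^ 2 := by
  have hvariance : 0 ≤ ∫ τ in (0)..t, (w τ - (∫ σ in (0)..t, w σ) / t) ^ 2 :=
    intervalIntegral.integral_nonneg ht.le fun τ _ => sq_nonneg _
  rw [integral_sq_sub_mean ht hw, sub_nonneg, div_le_iff₀ ht] at hvariance
  linarith

lemma sq_le_mul_setIntegral_sq {t ε : ℝ} {v v' : ℝ → ℝ} (ht : t ∈ Ioo 0 ε) (hv0 : v 0 = 0)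
    (hv : ∀ τ ∈ Icc 0 ε, HasDerivWithinAt v (v' τ) (Icc 0 ε) τ) (hv' : ContinuousOn v' (Icc 0 ε)) :
    v t ^ 2 ≤ ε * ∫ τ in Ioo 0 ε, v' τ ^ 2 := by
  have hsub : Icc 0 t ⊆ Icc 0 ε := Icc_subset_Icc_right ht.2.le
  have hvc : ContinuousOn v (Icc 0 ε) := fun τ hτ => (hv τ hτ).continuousWithinAt
  have hftc : ∫ τ in (0)..t, v' τ = v t := by
    rw [intervalIntegral.integral_eq_sub_of_hasDerivAt_of_le ht.1.le (hvc.mono hsub)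
      (fun τ hτ => (hv τ ⟨hτ.1.le, hτ.2.le.trans ht.2.le⟩).hasDerivAt
        (Icc_mem_nhds hτ.1 (hτ.2.trans ht.2)))
      ((hv'.mono hsub).intervalIntegrable_of_Icc ht.1.le), hv0, sub_zero]
  calc v t ^ 2 ≤ t * ∫ τ in (0)..t, v' τ ^ 2 := hftc ▸ sq_integral_le ht.1 (hv'.mono hsub)
    _ = t * ∫ τ in Ioc 0 t, v' τ ^ 2 := by rw [intervalIntegral.integral_of_le ht.1.le]
    _ ≤ t * ∫ τ in Ioo 0 ε, v' τ ^ 2 := by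
        refine mul_le_mul_of_nonneg_left (setIntegral_mono_set
          ((hv'.pow 2).integrableOn_Icc.mono_set Ioo_subset_Icc_self)
          (Filter.Eventually.of_forall fun τ => sq_nonneg _) ?_) ht.1.le
        exact (Ioc_subset_Ioo_right ht.2).eventuallyLE
    _ ≤ ε * ∫ τ in Ioo 0 ε, v' τ ^ 2 :=
        mul_le_mul_of_nonneg_right ht.2.le (integral_nonneg fun τ => sq_nonneg _)

variable {X : Type*} [TopologicalSpace X] [T2Space X]
  [MeasurableSpace X] [OpensMeasurableSpace X] {μ : Measure X} [IsFiniteMeasure μ]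
  {K S : Set X} (hK : IsCompact K) (hSK : S ⊆ K) (hμ : ∀ᵐ x ∂μ, x ∈ S) {ε : ℝ} {y y' : X → ℝ → ℝ}
include hK hSK hμ

theorem setIntegral_sq_add_sq_deriv_le (hε : 0 ≤ ε)
    (hy : ContinuousOn (fun q : X × ℝ => y q.1 q.2) (K ×ˢ Icc 0 ε))
    (hy' : ContinuousOn (fun q : X × ℝ => y' q.1 q.2) (K ×ˢ Icc 0 ε))
    (hderiv : ∀ x ∈ S, ∀ t ∈ Icc 0 ε, HasDerivWithinAt (y x) (y' x t) (Icc 0 ε) t)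
    (hy0 : ∀ x ∈ S, y x 0 = 0) :
    ∫ t in Ioo 0 ε, ∫ x, (y x t ^ 2 + y' x t ^ 2) ∂μ ≤
      (1 + ε ^ 2) * ∫ t in Ioo 0 ε, ∫ x, y' x t ^ 2 ∂μ := by
  have hμK : ∀ᵐ x ∂μ, x ∈ K := hμ.mono hSK
  have hy'2 : ContinuousOn (fun q : X × ℝ => y' q.1 q.2 ^ 2) (K ×ˢ Icc 0 ε) := hy'.pow 2
  set W := ∫ t in Ioo 0 ε, ∫ x, y' x t ^ 2 ∂μ with hW
  have hslice : ∀ t ∈ Ioo 0 ε,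
      ∫ x, (y x t ^ 2 + y' x t ^ 2) ∂μ ≤ ε * W + ∫ x, y' x t ^ 2 ∂μ := by
    intro t ht
    have hy't := integrable_space_slice (F := fun x t => y' x t ^ 2) hy'2 hK hμK
      (Ioo_subset_Icc_self ht)
    have hyt := integrable_space_slice (F := fun x t => y x t ^ 2) (hy.pow 2) hK hμK
      (Ioo_subset_Icc_self ht)
    rw [integral_add hyt hy't, hW, ← integral_setIntegral_swap (F := fun x t => y' x t ^ 2) hy'2 hK
      hμK, ← integral_const_mul]
    refine add_le_add_left (integral_mono_ae hyt
      ((integrable_cylinder (F := fun x t => y' x t ^ 2) hy'2 hK hμK).integral_prod_left.const_mul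
        ε) (hμ.mono fun x hx => ?_)) _
    exact sq_le_mul_setIntegral_sq ht (hy0 x hx) (hderiv x hx)
      (continuousOn_time_slice hy' (hSK hx))
  have hWint : IntegrableOn (fun t => ∫ x, y' x t ^ 2 ∂μ) (Ioo 0 ε) :=
    integrableOn_integral_space (F := fun x t => y' x t ^ 2) hy'2 hK hμK
  have hconst : Integrable (fun _ : ℝ => ε * W) (volume.restrict (Ioo 0 ε)) :=
    integrable_const _
  calc ∫ t in Ioo 0 ε, ∫ x, (y x t ^ 2 + y' x t ^ 2) ∂μ
      ≤ ∫ t in Ioo 0 ε, (ε * W + ∫ x, y' x t ^ 2 ∂μ) :=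
        setIntegral_mono_on (integrableOn_integral_space
          (F := fun x t => y x t ^ 2 + y' x t ^ 2) ((hy.pow 2).add hy'2) hK hμK)
          (hconst.add hWint) measurableSet_Ioo hslice
    _ = (1 + ε ^ 2) * W := by
        rw [integral_add hconst hWint, setIntegral_const, ← hW,
          Real.volume_real_Ioo_of_le hε, smul_eq_mul]
        ring

end InitiallyVanishing

section SupremumBound

variable {X : Type*} [TopologicalSpace X] {K D : Set X} (hK : IsCompact K) (hDK : D ⊆ K) {T a : ℝ}
  {u : X → ℝ → ℝ} (hu : ContinuousOn (fun q : X × ℝ => u q.1 q.2) (K ×ˢ Icc 0 T))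
include hK hDK hu

lemma bddAbove_range_abs_slice {t : ℝ} (ht : t ∈ Icc 0 T) :
    BddAbove (range fun x : D => |u x t|) := by
  obtain ⟨C, hC⟩ := hK.exists_bound_of_continuousOn (continuousOn_space_slice hu ht)
  exact ⟨C, forall_mem_range.2 fun x => hC x (hDK x.2)⟩

/- A supremum of uncountably many functions is measurable here by lower semicontinuity; extending
them from `[0, T]` to constants makes them continuous on the whole line. -/
lemma integrableOn_sq_iSup_abs (hT : 0 ≤ T) :
    IntegrableOn (fun t => (⨆ x : D, |u x t|) ^ 2) (Ioo 0 T) := by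
  obtain ⟨C, hC⟩ := (hK.prod isCompact_Icc).exists_bound_of_continuousOn hu
  have hlsc : LowerSemicontinuous fun t => ⨆ x : D, |u x (projIcc 0 T hT t)| :=
    lowerSemicontinuous_ciSup
      (fun t => bddAbove_range_abs_slice hK hDK hu (projIcc 0 T hT t).2) fun x =>
      ((continuousOn_iff_continuous_domRestrict.1 (continuousOn_time_slice hu (hDK x.2))).comp
        continuous_projIcc).abs.lowerSemicontinuous
  have hint : IntegrableOn (fun t => (⨆ x : D, |u x (projIcc 0 T hT t)|) ^ 2) (Ioo 0 T) := by
    refine Measure.integrableOn_of_bounded (M := |C| ^ 2) (by simp)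
      (hlsc.measurable.pow_const 2).aestronglyMeasurable (Filter.Eventually.of_forall fun t => ?_)
    rw [Real.norm_of_nonneg (sq_nonneg _)]
    refine pow_le_pow_left₀ (Real.iSup_nonneg fun x => abs_nonneg _) (Real.iSup_le (fun x => ?_)
      (abs_nonneg C)) 2
    exact (hC (x, _) ⟨hDK x.2, (projIcc 0 T hT t).2⟩).trans (le_abs_self C)
  refine hint.congr_fun (fun t ht => ?_) measurableSet_Ioo
  simp only [projIcc_of_mem hT (Ioo_subset_Icc_self ht)]

variable [T2Space X] [MeasurableSpace X] [OpensMeasurableSpace X]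
  {μ : Measure X} [IsFiniteMeasure μ] (hμ : ∀ᵐ x ∂μ, x ∈ D)
include hμ

theorem setIntegral_integral_sq_le_of_iSup_abs (hT : 0 ≤ T) (ha : 0 ≤ a) :
    ∫ t in Ioo a T, ∫ x, u x t ^ 2 ∂μ ≤
      μ.real univ * ∫ t in Ioo 0 T, (⨆ x : D, |u x t|) ^ 2 := by
  have hμK : ∀ᵐ x ∂μ, x ∈ K := hμ.mono hDK
  have hu2 : IntegrableOn (fun t => ∫ x, u x t ^ 2 ∂μ) (Ioo 0 T) :=
    integrableOn_integral_space (F := fun x t => u x t ^ 2) (hu.pow 2) hK hμK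
  have hslice : ∀ t ∈ Ioo 0 T, ∫ x, u x t ^ 2 ∂μ ≤ μ.real univ * (⨆ x : D, |u x t|) ^ 2 := by
    intro t ht
    have ht' := Ioo_subset_Icc_self ht
    rw [← smul_eq_mul, ← integral_const]
    refine integral_mono_ae (integrable_space_slice (F := fun x t => u x t ^ 2) (hu.pow 2) hK hμK
      ht') (integrable_const _) (hμ.mono fun x hx => ?_)
    dsimp only
    rw [← sq_abs (u x t)]
    exact pow_le_pow_left₀ (abs_nonneg _)
      (le_ciSup (f := fun x : D => |u x t|) (bddAbove_range_abs_slice hK hDK hu ht') ⟨x, hx⟩) 2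
  calc ∫ t in Ioo a T, ∫ x, u x t ^ 2 ∂μ ≤ ∫ t in Ioo 0 T, ∫ x, u x t ^ 2 ∂μ :=
        setIntegral_mono_set hu2
          (Filter.Eventually.of_forall fun t => integral_nonneg fun x => sq_nonneg _)
          (Ioo_subset_Ioo_left ha).eventuallyLE
    _ ≤ ∫ t in Ioo 0 T, μ.real univ * (⨆ x : D, |u x t|) ^ 2 :=
        setIntegral_mono_on hu2 ((integrableOn_sq_iSup_abs hK hDK hu hT).const_mul _)
          measurableSet_Ioo hslice
    _ = μ.real univ * ∫ t in Ioo 0 T, (⨆ x : D, |u x t|) ^ 2 := integral_const_mul _ _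

end SupremumBound

section Stability

variable {E : Type*} [NormedAddCommGroup E] [NormedSpace ℝ E]

/-- The linearized source problem: `y` is a `C²` solution, up to the boundary of the cylinder over
`D`, of `∂ₜy + ⟨H, ∇y⟩ + py = R f` which vanishes at time zero. -/
structure IsSourceSolution (D : Set E) (T : ℝ) (H : E → E) (p : E → ℝ) (R : E → ℝ → ℝ)
    (f : E → ℝ) (y : E → ℝ → ℝ) : Prop where
  continuousOn_source : ContinuousOn f (closure D)
  contDiffOn : ContDiffOn ℝ 2 (fun q : E × ℝ => y q.1 q.2) (closure D ×ˢ Icc 0 T)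
  equation : ∀ x ∈ D, ∀ t ∈ Ioo 0 T,
    deriv (y x) t + fderiv ℝ (fun z => y z t) x (H x) + p x * y x t = R x t * f x
  initial : ∀ x ∈ D, y x 0 = 0

variable {D : Set E} {T M N P β C₂ V ε s₀ r₀ r₁ : ℝ} {H : E → E} {p f ψ : E → ℝ}
  {R u r y : E → ℝ → ℝ}

namespace IsSourceSolution

section TimeDerivative

variable (hy : IsSourceSolution D T H p R f y) (hD : IsOpen D) (hT : 0 < T)
include hy

lemma contDiffOn_timeDeriv (hT : 0 < T) :
    ContDiffOn ℝ 1 (fun q : E × ℝ => timeDeriv T y q.1 q.2) (closure D ×ˢ Icc 0 T) :=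
  _root_.contDiffOn_timeDeriv (n := 1) hT hy.contDiffOn

include hD hT

lemma isTransportSolution_timeDeriv (hp : ContinuousOn p (closure D))
    (hR : ContDiffOn ℝ 1 (fun q : E × ℝ => R q.1 q.2) (closure D ×ˢ Icc 0 T)) :
    IsTransportSolution D T H p (timeDeriv T y) (fun x t => timeDeriv T R x t * f x) where
  contDiffOn := hy.contDiffOn_timeDeriv hT
  continuousOn_coeff := hp
  continuousOn_source :=
    (_root_.contDiffOn_timeDeriv (n := 0) hT (by simpa using hR)).continuousOn.mul
      (hy.continuousOn_source.comp continuousOn_fst fun q hq => hq.1)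
  equation _ hx _ ht :=
    have hsub := prod_mono_left (subset_closure (s := D))
    timeDeriv_transport hD (hy.contDiffOn.mono hsub) hy.equation (hR.mono hsub) hx ht

variable (hR : ContinuousOn (fun q : E × ℝ => R q.1 q.2) (closure D ×ˢ Icc 0 T)) (hr₀ : 0 < r₀)
  (hR0 : ∀ x ∈ D, r₀ ≤ |R x 0|)
include hR hr₀ hR0

lemma sq_source_le {x : E} (hx : x ∈ D) : f x ^ 2 ≤ (1 / r₀) ^ 2 * timeDeriv T y x 0 ^ 2 := by
  have hsub : D ×ˢ Icc 0 T ⊆ closure D ×ˢ Icc 0 T := prod_mono_left subset_closure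
  rw [timeDeriv_zero hT hD (hy.contDiffOn.mono hsub) hy.equation (hR.mono hsub) hy.initial hx,
    div_pow, one_pow, one_div, ← div_eq_inv_mul, le_div_iff₀ (pow_pos hr₀ 2), mul_pow, mul_comm]
  exact mul_le_mul_of_nonneg_right (sq_le_sq.2 ((abs_of_pos hr₀).trans_le (hR0 x hx)))
    (sq_nonneg _)

lemma sq_timeDeriv_mul_source_le (hr₁ : ∀ x ∈ D, ∀ t ∈ Ioo 0 T, |timeDeriv T R x t| ≤ r₁) :
    ∀ x ∈ D, ∀ t ∈ Ioo 0 T,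
      (timeDeriv T R x t * f x) ^ 2 ≤ (r₁ / r₀) ^ 2 * timeDeriv T y x 0 ^ 2 := by
  intro x hx t ht
  calc (timeDeriv T R x t * f x) ^ 2 = timeDeriv T R x t ^ 2 * f x ^ 2 := mul_pow _ _ _
    _ ≤ r₁ ^ 2 * ((1 / r₀) ^ 2 * timeDeriv T y x 0 ^ 2) :=
        mul_le_mul (sq_le_sq.2 ((hr₁ x hx t ht).trans (le_abs_self r₁)))
          (hy.sq_source_le hD hT hR hr₀ hR0 hx) (sq_nonneg _) (sq_nonneg _)
    _ = (r₁ / r₀) ^ 2 * timeDeriv T y x 0 ^ 2 := by ring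

end TimeDerivative

variable [MeasurableSpace E] [OpensMeasurableSpace E]
  {μ ν : Measure E} [IsFiniteMeasure μ]

lemma sqrt_add_sqrt_le (hy : IsSourceSolution D T H p R f y) (hT : 0 < T)
    (hD : IsTransportDomain D H μ ν M N)
    (hR : ContinuousOn (fun q : E × ℝ => R q.1 q.2) (closure D ×ˢ Icc 0 T)) (hr₀ : 0 < r₀)
    (hR0 : ∀ x ∈ D, r₀ ≤ |R x 0|) (hε : ε ∈ Icc 0 T) :
    √(∫ x, f x ^ 2 ∂μ) + √(∫ t in Ioo 0 ε, ∫ x, (y x t ^ 2 + timeDeriv T y x t ^ 2) ∂μ) ≤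
      (1 / r₀ + √(1 + ε ^ 2)) * √((∫ x, timeDeriv T y x 0 ^ 2 ∂μ) +
        ∫ t in Ioo 0 ε, ∫ x, timeDeriv T y x t ^ 2 ∂μ) := by
  have huc := (hy.contDiffOn_timeDeriv hT).continuousOn
  have hyc := hy.contDiffOn.continuousOn
  have hεT : Icc 0 ε ⊆ Icc 0 T := Icc_subset_Icc_right hε.2
  have hcyl : closure D ×ˢ Icc 0 ε ⊆ closure D ×ˢ Icc 0 T := prod_mono_right hεT
  set A := ∫ x, timeDeriv T y x 0 ^ 2 ∂μ with hAdef
  set B := ∫ t in Ioo 0 ε, ∫ x, timeDeriv T y x t ^ 2 ∂μ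
  have hA : 0 ≤ A := integral_nonneg fun x => sq_nonneg _
  have hB : 0 ≤ B := integral_nonneg fun t => integral_nonneg fun x => sq_nonneg _
  have hf : ∫ x, f x ^ 2 ∂μ ≤ (1 / r₀) ^ 2 * A := by
    rw [hAdef, ← integral_const_mul]
    exact integral_mono_ae (hD.integrable (hy.continuousOn_source.pow 2))
      (hD.integrable (((continuousOn_space_slice huc (left_mem_Icc.2 hT.le)).pow 2).const_mul _))
      (hD.ae_mem.mono fun x => hy.sq_source_le hD.isOpen hT hR hr₀ hR0)
  have hearly : ∫ t in Ioo 0 ε, ∫ x, (y x t ^ 2 + timeDeriv T y x t ^ 2) ∂μ ≤ (1 + ε ^ 2) * B :=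
    setIntegral_sq_add_sq_deriv_le hD.isCompact_closure subset_closure hD.ae_mem hε.1
      (hyc.mono hcyl) (huc.mono hcyl) (fun x hx t ht => (hasDerivWithinAt_timeDeriv
        (hy.contDiffOn.of_le one_le_two) (subset_closure hx) (hεT ht)).mono hεT) hy.initial
  calc √(∫ x, f x ^ 2 ∂μ) + √(∫ t in Ioo 0 ε, ∫ x, (y x t ^ 2 + timeDeriv T y x t ^ 2) ∂μ)
      ≤ √((1 / r₀) ^ 2 * A) + √((1 + ε ^ 2) * B) :=
        add_le_add (Real.sqrt_le_sqrt hf) (Real.sqrt_le_sqrt hearly)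
    _ = 1 / r₀ * √A + √(1 + ε ^ 2) * √B := by
        rw [Real.sqrt_mul (sq_nonneg _), Real.sqrt_sq (by positivity),
          Real.sqrt_mul (by positivity)]
    _ ≤ 1 / r₀ * √(A + B) + √(1 + ε ^ 2) * √(A + B) := by gcongr <;> linarith
    _ = (1 / r₀ + √(1 + ε ^ 2)) * √(A + B) := (add_mul _ _ _).symm

end IsSourceSolution

variable [MeasurableSpace E] [OpensMeasurableSpace E]
  {μ ν : Measure E} [IsFiniteMeasure μ] [IsFiniteMeasure ν]

theorem IsTransportSolution.sqrt_energy_le (hu : IsTransportSolution D T H p u r) (hT : 0 < T)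
    (hD : IsTransportDomain D H μ ν M N) (hM : 0 ≤ M) (hψ : IsCarlemanWeight D H ψ β)
    (hψT : ∀ x ∈ closure D, |ψ x| ≤ β * T / 4) (hp : ∀ x ∈ D, p x ≤ P)
    (hr : ∀ x ∈ D, ∀ t ∈ Ioo 0 T, r x t ^ 2 ≤ C₂ * u x 0 ^ 2) (hC₂ : 0 ≤ C₂) (hs₀ : 0 < s₀)
    (hs₀C₂ : C₂ ≤ s₀ * β) (hs₀P : 4 / T + N + 2 ≤ 2 * (s₀ * β - P))
    (hV : ∫ t in Ioo (3 * T / 4) T, ∫ x, u x t ^ 2 ∂μ ≤ V) :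
    √((∫ x, u x 0 ^ 2 ∂μ) + ∫ t in Ioo 0 (T / 16), ∫ x, u x t ^ 2 ∂μ) ≤
      √((V + T * M) / (T / 2)) * (2 * Real.exp (9 * (β * T) / 16 * s₀)) *
        (√(∫ t in Ioo 0 T, ∫ x, u x t ^ 2 ∂ν) ^ (1 / 4 : ℝ) +
          √(∫ t in Ioo 0 T, ∫ x, u x t ^ 2 ∂ν)) := by
  have hβ := hψ.speed_pos
  set b := √(∫ t in Ioo 0 T, ∫ x, u x t ^ 2 ∂ν)
  have hb : b ^ 2 = ∫ t in Ioo 0 T, ∫ x, u x t ^ 2 ∂ν :=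
    Real.sq_sqrt (integral_nonneg fun t => integral_nonneg fun x => sq_nonneg _)
  have hV0 : 0 ≤ V := (integral_nonneg fun t => integral_nonneg fun x => sq_nonneg _).trans hV
  have hexponent : 3 * (β * T) / 16 / (3 * (β * T) / 16 + 9 * (β * T) / 16) = 1 / 4 := by
    field_simp
    norm_num
  rw [← hexponent]
  refine le_rpow_add_self_of_forall_exp (by positivity) (by positivity) (Real.sqrt_nonneg _)
    (Real.sqrt_nonneg _) hs₀.le fun s hs => ?_
  have hsβ : s₀ * β ≤ s * β := mul_le_mul_of_nonneg_right hs hβ.le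
  have hs0 : 0 < s := hs₀.trans_le hs
  have henergy := energy_le_of_carleman_estimate hD.isCompact_closure hD.ae_mem_closure
    hψ.contDiffOn.continuousOn hu.contDiffOn.continuousOn hs0.le hD.ae_boundary_mem_closure hT hM
    hβ.le hψT (hu.carleman_estimate hT hD hM hψ hp hr hC₂ hs0 (hs₀C₂.trans hsβ) (by linarith))
  refine sqrt_le_mul_exp_add_exp (half_pos hT) hV0 (by positivity) (Real.sqrt_nonneg _)
    (henergy.trans ?_)
  have hlate := mul_le_mul_of_nonneg_left hV (Real.exp_pos (2 * s * -(β * T / 2))).le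
  rw [hb, show -(5 * (β * T) / 16) - 3 * (β * T) / 16 = -(β * T / 2) by ring,
    show -(5 * (β * T) / 16) + 9 * (β * T) / 16 = β * T / 4 by ring]
  linarith

theorem exists_conditional_holder_stability (hT : 0 < T) (hD : IsTransportDomain D H μ ν M N)
    (hM : 0 ≤ M) (hψ : IsCarlemanWeight D H ψ β) (hψT : ∀ x ∈ closure D, |ψ x| ≤ β * T / 4)
    (hp : ContinuousOn p (closure D))
    (hR : ContDiffOn ℝ 1 (fun q : E × ℝ => R q.1 q.2) (closure D ×ˢ Icc 0 T))
    (hR0 : ∀ x ∈ closure D, R x 0 ≠ 0) (V : ℝ) :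
    ∃ C > 0, ∀ f y, IsSourceSolution D T H p R f y →
      ∫ t in Ioo (3 * T / 4) T, ∫ x, timeDeriv T y x t ^ 2 ∂μ ≤ V →
      √(∫ x, f x ^ 2 ∂μ) +
          √(∫ t in Ioo 0 (T / 16), ∫ x, (y x t ^ 2 + timeDeriv T y x t ^ 2) ∂μ) ≤
        C * (√(∫ t in Ioo 0 T, ∫ x, timeDeriv T y x t ^ 2 ∂ν) ^ (1 / 4 : ℝ) +
          √(∫ t in Ioo 0 T, ∫ x, timeDeriv T y x t ^ 2 ∂ν)) := by
  have hβ := hψ.speed_pos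
  have hcyl := hD.isCompact_closure.prod (isCompact_Icc (a := 0) (b := T))
  obtain ⟨r₀, hr₀, hR0'⟩ := hD.isCompact_closure.exists_forall_le'
    (continuousOn_space_slice hR.continuousOn (left_mem_Icc.2 hT.le)).abs (a := 0)
    fun x hx => abs_pos.2 (hR0 x hx)
  obtain ⟨r₁, hr₁⟩ := hcyl.exists_bound_of_continuousOn
    (contDiffOn_timeDeriv (n := 0) hT (by simpa using hR)).continuousOn
  obtain ⟨P, hP⟩ := hD.isCompact_closure.exists_bound_of_continuousOn hp
  have hlim : Filter.Tendsto (fun s => s * β) Filter.atTop Filter.atTop :=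
    Filter.tendsto_id.atTop_mul_const hβ
  obtain ⟨s₀, hs₀, hs₀C₂, hs₀P⟩ := ((Filter.eventually_gt_atTop 0).and
    ((hlim.eventually_ge_atTop ((r₁ / r₀) ^ 2)).and
      (hlim.eventually_ge_atTop ((4 / T + N + 2) / 2 + P)))).exists
  set B := √((V + T * M) / (T / 2)) * (2 * Real.exp (9 * (β * T) / 16 * s₀))
  refine ⟨(1 / r₀ + √(1 + (T / 16) ^ 2)) * (B + 1), by positivity, fun f y hy hV => ?_⟩
  have hclosure {x} (hx : x ∈ D) : x ∈ closure D := subset_closure hx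
  have hsum := hy.sqrt_add_sqrt_le hT hD hR.continuousOn hr₀ (fun x hx => hR0' x (hclosure hx))
    (ε := T / 16) ⟨by positivity, by linarith⟩
  have henergy := (hy.isTransportSolution_timeDeriv hD.isOpen hT hp hR).sqrt_energy_le hT hD hM hψ
    hψT (fun x hx => (le_abs_self _).trans (hP x (hclosure hx)))
    (hy.sq_timeDeriv_mul_source_le hD.isOpen hT hR.continuousOn hr₀
      (fun x hx => hR0' x (hclosure hx))
      fun x hx t ht => hr₁ (x, t) ⟨hclosure hx, Ioo_subset_Icc_self ht⟩)
    (sq_nonneg _) hs₀ hs₀C₂ (by linarith) hV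
  refine hsum.trans ?_
  rw [mul_assoc]
  refine mul_le_mul_of_nonneg_left (henergy.trans ?_) (by positivity)
  gcongr
  exact le_add_of_nonneg_right zero_le_one

end Stability

section RadialWeight

variable {n : ℕ} {M δ₀ : ℝ} {D U K : Set (Esp n)} {H : Esp n → Esp n} {x : Esp n}

lemma contDiffOn_psiW (hH : ContDiffOn ℝ 1 H U) : ContDiffOn ℝ 1 (psiW H) U :=
  contDiffOn_id.inner ℝ hH

lemma fderiv_psiW_apply (hH : DifferentiableAt ℝ H x) (v : Esp n) :
    fderiv ℝ (psiW H) x v = ⟪v, H x⟫ + ⟪x, fderiv ℝ H x v⟫ := by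
  have h := fderiv_inner_apply ℝ (differentiableAt_id (𝕜 := ℝ) (x := x)) hH v
  rw [fderiv_id] at h
  exact h.trans (add_comm _ _)

lemma norm_le_diam_of_mem_closure {E : Type*} [SeminormedAddCommGroup E] {D : Set E} {x : E}
    (hD : Bornology.IsBounded D) (h0 : 0 ∈ closure D) (hx : x ∈ closure D) : ‖x‖ ≤ diam D := by
  rw [← dist_zero_right, ← Metric.diam_closure]
  exact dist_le_diam_of_mem hD.closure hx h0

namespace IsAdmissible

lemma lt_of_nonempty (hH : IsAdmissible M δ₀ K H) (hK : K.Nonempty) : δ₀ < M := by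
  obtain ⟨U, -, -, hKU, -, hHM, -, hδ₀⟩ := hH
  obtain ⟨x, hx⟩ := hK
  exact (hδ₀ x hx).trans_le (hHM x (hKU hx))

variable (hH : IsAdmissible M δ₀ (closure D) H) (hD : Bornology.IsBounded D) (h0 : 0 ∈ closure D)
include hH hD h0

lemma abs_psiW_le (hx : x ∈ closure D) : |psiW H x| ≤ diam D * M := by
  obtain ⟨U, -, -, hDU, -, hHM, -, -⟩ := hH
  exact (abs_real_inner_le_norm _ _).trans (mul_le_mul (norm_le_diam_of_mem_closure hD h0 hx)
    (hHM x (hDU hx)) (norm_nonneg _) diam_nonneg)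

theorem isCarlemanWeight_psiW (hδ₀ : 0 < δ₀) (hdiam : diam D * (2 * M ^ 2) ≤ δ₀ ^ 2) :
    IsCarlemanWeight D H (psiW H) (δ₀ ^ 2 / 4) := by
  obtain ⟨U, hU, -, hDU, hH1, hHM, hDH, hHδ₀⟩ := hH
  have hderiv : ∀ x ∈ closure D,
      fderiv ℝ (psiW H) x (H x) = ⟪H x, H x⟫ + ⟪x, fderiv ℝ H x (H x)⟫ := fun x hx =>
    fderiv_psiW_apply ((hH1.contDiffAt (hU.mem_nhds (hDU hx))).differentiableAt one_ne_zero) _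
  have hHc : ContinuousOn H (closure D) := hH1.continuousOn.mono hDU
  have hDHc : ContinuousOn (fderiv ℝ H) (closure D) :=
    (hH1.continuousOn_fderiv_of_isOpen hU le_rfl).mono hDU
  refine ⟨by positivity, contDiffOn_psiW (hH1.mono hDU), ((hHc.inner hHc).add
    (continuousOn_id.inner (hDHc.clm_apply hHc))).congr hderiv, fun x hx => ?_⟩
  have hx' := subset_closure hx
  have hspeed : δ₀ ^ 2 ≤ ⟪H x, H x⟫ := by
    rw [real_inner_self_eq_norm_sq]
    exact pow_le_pow_left₀ hδ₀.le (hHδ₀ x hx').le 2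
  have hDHH : ‖fderiv ℝ H x (H x)‖ ≤ M * M := (fderiv ℝ H x).le_of_opNorm_le_of_le
    (hDH x (hDU hx')) (hHM x (hDU hx'))
  have hbending : |⟪x, fderiv ℝ H x (H x)⟫| ≤ diam D * (M * M) :=
    (abs_real_inner_le_norm _ _).trans (mul_le_mul (norm_le_diam_of_mem_closure hD h0 hx')
      hDHH (norm_nonneg _) diam_nonneg)
  rw [hderiv x hx']
  linarith [(abs_le.1 hbending).1]

end IsAdmissible

end RadialWeight

section GraphDomain

variable {d : ℕ} {T M δ₀ ρ : ℝ} {ℓ ℓt : Esp d → ℝ} {H : Esp (d + 1) → Esp (d + 1)}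
  {y : Esp (d + 1) → ℝ → ℝ}

namespace IsGraphProfile

variable (h : IsGraphProfile ρ ℓ ℓt)
include h

lemma isTransportDomain (hH : IsAdmissible M δ₀ (closure (graphDomain d ρ ℓ ℓt)) H)
    (hinflow : ∀ x' ∈ ball (0 : Esp d) ρ,
      ⟪H (graphMk d x' ((ℓ - ℓt) x')), nuDown d (ℓ - ℓt) x'⟫ ≤ 0) :
    IsTransportDomain (graphDomain d ρ ℓ ℓt) H (volume.restrict (graphDomain d ρ ℓ ℓt))
      (graphMeasure d ρ ℓ) M ((d + 1) * M) := by
  obtain ⟨U, hU, -, hDU, hH1, hHM, hDH, -⟩ := hH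
  exact ⟨h.isOpen, h.isCompact_closure, ae_restrict_mem h.isOpen.measurableSet,
    h.ae_graphMeasure_mem_closure, fun g hg hg0 hg1 hgH =>
      h.setIntegral_fderiv_le hU hDU hH1 hHM hDH hinflow hg hg0 hg1 hgH⟩

lemma setIntegral_sq_timeDeriv_graphMeasure (hT : 0 < T)
    (hy : ContDiffOn ℝ 1 (fun q : Esp (d + 1) × ℝ => y q.1 q.2)
      (closure (graphDomain d ρ ℓ ℓt) ×ˢ Icc 0 T)) :
    ∫ t in Ioo 0 T, ∫ x, timeDeriv T y x t ^ 2 ∂graphMeasure d ρ ℓ =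
      ∫ t in Ioo 0 T, ∫ x' in ball (0 : Esp d) ρ,
        deriv (y (graphMk d x' (ℓ x'))) t ^ 2 * omegaW d ℓ x' := by
  have hc := (contDiffOn_timeDeriv (n := 0) hT (by simpa using hy)).continuousOn
  refine setIntegral_congr_fun measurableSet_Ioo fun t ht => ?_
  refine (h.integral_graphMeasure
    ((continuousOn_space_slice hc (Ioo_subset_Icc_self ht)).pow 2)).trans ?_
  simp only [Pi.pow_apply, timeDeriv_eq_deriv ht]

end IsGraphProfile

theorem proposition2_conditional_holder_stability_general (hT : 0 < T) (hδ₀ : 0 < δ₀)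
    (h : IsGraphProfile ρ ℓ ℓt) {R : Esp (d + 1) → ℝ → ℝ}
    (hR : ContDiffOn ℝ 1 (fun q : Esp (d + 1) × ℝ => R q.1 q.2)
      (closure (graphDomain d ρ ℓ ℓt) ×ˢ Icc 0 T))
    (hH : IsAdmissible M δ₀ (closure (graphDomain d ρ ℓ ℓt)) H)
    {p : Esp (d + 1) → ℝ} (hp : ContinuousOn p (closure (graphDomain d ρ ℓ ℓt)))
    (h0 : (0 : Esp (d + 1)) ∈ closure (graphDomain d ρ ℓ ℓt))
    (hdiam : diam (graphDomain d ρ ℓ ℓt) ≤ δ₀ ^ 2 / (2 * M ^ 2))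
    (hdiamT : diam (graphDomain d ρ ℓ ℓt) ≤ δ₀ ^ 2 * T / (16 * M))
    (hR0 : ∀ x ∈ closure (graphDomain d ρ ℓ ℓt), R x 0 ≠ 0)
    (hinflow : ∀ x' ∈ ball (0 : Esp d) ρ,
      ⟪H (graphMk d x' ((ℓ - ℓt) x')), nuDown d (ℓ - ℓt) x'⟫ ≤ 0) (M₀ : ℝ) :
    ∃ C > 0, ∀ (f : Esp (d + 1) → ℝ) (y : Esp (d + 1) → ℝ → ℝ),
      ContinuousOn f (closure (graphDomain d ρ ℓ ℓt)) →
      ContDiffOn ℝ 2 (fun q : Esp (d + 1) × ℝ => y q.1 q.2)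
        (closure (graphDomain d ρ ℓ ℓt) ×ˢ Icc 0 T) →
      (∀ x ∈ graphDomain d ρ ℓ ℓt, ∀ t ∈ Ioo 0 T,
        deriv (y x) t + ⟪H x, gradient (fun z => y z t) x⟫ + p x * y x t = R x t * f x) →
      (∀ x ∈ graphDomain d ρ ℓ ℓt, y x 0 = 0) →
      ∫ t in Ioo 0 T, (⨆ x : graphDomain d ρ ℓ ℓt, |deriv (y x) t|) ^ 2 ≤ M₀ ^ 2 →
      √(∫ x in graphDomain d ρ ℓ ℓt, f x ^ 2) +
          √(∫ t in Ioo 0 (T / 16), ∫ x in graphDomain d ρ ℓ ℓt,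
            (y x t ^ 2 + deriv (y x) t ^ 2)) ≤
        C * (√(∫ t in Ioo 0 T, ∫ x' in ball (0 : Esp d) ρ,
              deriv (y (graphMk d x' (ℓ x'))) t ^ 2 * omegaW d ℓ x') ^ (1 / 4 : ℝ) +
          √(∫ t in Ioo 0 T, ∫ x' in ball (0 : Esp d) ρ,
            deriv (y (graphMk d x' (ℓ x'))) t ^ 2 * omegaW d ℓ x')) := by
  set D := graphDomain d ρ ℓ ℓt
  have hM : 0 < M := hδ₀.trans (hH.lt_of_nonempty ⟨0, h0⟩)
  have hbdd : Bornology.IsBounded D := h.isCompact_closure.isBounded.subset subset_closure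
  have := h.isFiniteMeasure
  have := h.isFiniteMeasure_graphMeasure
  rw [le_div_iff₀ (by positivity)] at hdiam hdiamT
  obtain ⟨C, hC, hstability⟩ := exists_conditional_holder_stability hT
    (h.isTransportDomain hH hinflow) hM.le (hH.isCarlemanWeight_psiW hbdd h0 hδ₀ hdiam)
    (fun x hx => (hH.abs_psiW_le hbdd h0 hx).trans (by linarith)) hp hR hR0
    ((volume.restrict D).real univ * M₀ ^ 2)
  refine ⟨C, hC, fun f y hf hy hpde hy0 hyM₀ => ?_⟩
  have hsolution : IsSourceSolution D T H p R f y := ⟨hf, hy, fun x hx t ht => by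
    rw [← hpde x hx t ht, real_inner_comm, gradient, InnerProductSpace.toDual_symm_apply], hy0⟩
  have hsup : ∫ t in Ioo 0 T, (⨆ x : D, |deriv (y x) t|) ^ 2 =
      ∫ t in Ioo 0 T, (⨆ x : D, |timeDeriv T y x t|) ^ 2 :=
    setIntegral_congr_fun measurableSet_Ioo fun t ht => by simp only [timeDeriv_eq_deriv ht]
  have hearly : ∫ t in Ioo 0 (T / 16), ∫ x in D, (y x t ^ 2 + deriv (y x) t ^ 2) =
      ∫ t in Ioo 0 (T / 16), ∫ x in D, (y x t ^ 2 + timeDeriv T y x t ^ 2) :=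
    setIntegral_congr_fun measurableSet_Ioo fun t ht => by
      simp only [timeDeriv_eq_deriv (T := T) ⟨ht.1, ht.2.trans (by linarith)⟩]
  have hlate := (setIntegral_integral_sq_le_of_iSup_abs (μ := volume.restrict D)
    h.isCompact_closure subset_closure
    (hsolution.contDiffOn_timeDeriv hT).continuousOn (a := 3 * T / 4)
    (ae_restrict_mem h.isOpen.measurableSet) hT.le (by positivity)).trans
      (mul_le_mul_of_nonneg_left (hsup.symm.trans_le hyM₀) measureReal_nonneg)
  rw [hearly, ← h.setIntegral_sq_timeDeriv_graphMeasure hT (hy.of_le one_le_two)]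
  exact hstability f y hsolution hlate

end GraphDomain

/-- **Proposition 2** (conditional Hölder stability for the linearized source
problem). -/
theorem proposition2_conditional_holder_stability
    (d : ℕ) (hd : 1 ≤ d) (T M δ₀ ρ₁ : ℝ)
    (hT : 0 < T) (hM : 0 < M) (hδ₀ : 0 < δ₀) (hρ₁ : 0 < ρ₁)
    (ℓ ℓt : Esp d → ℝ)
    (hℓ : ContDiffOn ℝ 2 ℓ (closedBall 0 ρ₁))
    (hℓt : ContDiffOn ℝ 2 ℓt (closedBall 0 ρ₁))
    (hℓtpos : ∀ x' : Esp d, ‖x'‖ < ρ₁ → 0 < ℓt x')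
    (hℓt0 : ∀ x' : Esp d, ‖x'‖ = ρ₁ → ℓt x' = 0)
    (R : Esp (d+1) → ℝ → ℝ)
    (hR : ContDiffOn ℝ 2 (fun q : Esp (d+1) × ℝ => R q.1 q.2)
      (closure (graphDomain d ρ₁ ℓ ℓt) ×ˢ Icc 0 T))
    (H : Esp (d+1) → Esp (d+1))
    (hH : IsAdmissible M δ₀ (closure (graphDomain d ρ₁ ℓ ℓt)) H)
    (p₁ : Esp (d+1) → ℝ) (hp₁ : ContinuousOn p₁ (closure (graphDomain d ρ₁ ℓ ℓt)))
    (hp₁b : ∀ x ∈ closure (graphDomain d ρ₁ ℓ ℓt), |p₁ x| ≤ M)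
    (h0D : (0 : Esp (d+1)) ∈ closure (graphDomain d ρ₁ ℓ ℓt))
    (hdiam : Metric.diam (graphDomain d ρ₁ ℓ ℓt)
      < min 1 (min (δ₀ ^ 2 / (2 * M ^ 2)) (δ₀ ^ 2 * T / (16 * M))))
    (hR0 : ∀ x ∈ closure (graphDomain d ρ₁ ℓ ℓt), R x 0 ≠ 0)
    (hHν₂ : ∀ x' : Esp d, ‖x'‖ < ρ₁ →
      ⟪H (graphMk d x' (ℓ x' - ℓt x')), nuDown d (fun z => ℓ z - ℓt z) x'⟫ ≤ 0)
    (M₀ : ℝ) (hM₀ : 0 < M₀) :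
    ∃ C > (0:ℝ), ∃ θ₁ ∈ Set.Ioo (0:ℝ) 1, ∃ ε ∈ Set.Ioo (0:ℝ) T,
      ∀ (f : Esp (d+1) → ℝ) (y : Esp (d+1) → ℝ → ℝ),
        ContinuousOn f (closure (graphDomain d ρ₁ ℓ ℓt)) →
        ContDiffOn ℝ 2 (fun q : Esp (d+1) × ℝ => y q.1 q.2)
          (closure (graphDomain d ρ₁ ℓ ℓt) ×ˢ Icc 0 T) →
        (∀ x ∈ graphDomain d ρ₁ ℓ ℓt, ∀ t ∈ Ioo (0:ℝ) T,
          deriv (y x) t + ⟪H x, gradient (fun z => y z t) x⟫ + p₁ x * y x t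
            = R x t * f x) →
        (∀ x ∈ graphDomain d ρ₁ ℓ ℓt, y x 0 = 0) →
        (∫ t in Ioo 0 T,
          (⨆ x : graphDomain d ρ₁ ℓ ℓt, |deriv (y (x : Esp (d+1))) t|) ^ 2) ≤ M₀ ^ 2 →
        Real.sqrt (∫ x in graphDomain d ρ₁ ℓ ℓt, (f x) ^ 2)
          + Real.sqrt (∫ t in Ioo 0 ε, ∫ x in graphDomain d ρ₁ ℓ ℓt,
              ((y x t) ^ 2 + (deriv (y x) t) ^ 2))
        ≤ C * ((Real.sqrt (∫ t in Ioo 0 T, ∫ x' in ball (0 : Esp d) ρ₁,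
            (deriv (y (graphMk d x' (ℓ x'))) t) ^ 2 * omegaW d ℓ x')) ^ θ₁ + Real.sqrt (∫ t in Ioo 0 T, ∫ x' in ball (0 : Esp d) ρ₁,
            (deriv (y (graphMk d x' (ℓ x'))) t) ^ 2 * omegaW d ℓ x')) := by
  obtain ⟨-, hdiamM, hdiamT⟩ := by simpa only [lt_min_iff] using hdiam
  obtain ⟨C, hC, hstability⟩ := proposition2_conditional_holder_stability_general hT hδ₀
    ⟨hρ₁, hℓ.of_le one_le_two, hℓt.of_le one_le_two, hℓtpos, hℓt0⟩ (hR.of_le one_le_two) hH hp₁ h0D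
    hdiamM.le hdiamT.le hR0 (fun x' hx' => hHν₂ x' (by simpa using hx')) M₀
  exact ⟨C, hC, 1 / 4, by norm_num, T / 16, ⟨by positivity, by linarith⟩, hstability⟩
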